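/- arXiv:1010.0817 — 2 statements merged into one kernel-verified Lean document; each statement's English description precedes it below -/
import Mathlib

section
/- Let n ≥ 3, m ≥ 1, let V be a repulsive potential, λ ≤ 0, ε ∈ ℝ, u ∈ C_c^∞(ℝ^n × ℝ^m; ℂ), and f := -Δu - (λ+iε)u + Vu. Then ‖∇_x u‖_X² + ‖u‖_{X₁}² ≤ 800·n²·‖f‖_{X*}². (This is the case λ ≤ 0 of the resolvent estimate, obtained with the weight ψ(x) = ∫_0^{|x|} α(r)dr where α(r) = 1/n − R^{n-1}/(2n(n+2)r^{n-1}) for r ≥ R and α(r) = 1/(2n) + r/(2nR) − r³/(2n(n+2)R³) for r < R, and φ ≡ 0.) -/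
/-!
For `λ ≤ 0` no commutator multiplier is needed: it suffices to test the equation against `ψ_R ū`
with the superharmonic weight `ψ_R = (R² + |x|²)^{-1/2}` and to take real parts. The parameter `ε`
disappears, the terms carrying `-λ ≥ 0` and `V ≥ 0` have a good sign, and integration by parts gives
(`energy`)
`∫ ψ_R |∇u|² + ½ ∫ (-Δψ_R) |u|² ≤ ∫ ψ_R |f| |u|`.

For `n ≥ 3` one has `-Δψ_R ≥ 3 R² (R² + |x|²)^{-5/2}` (`lap_wt_le`), so on `|x| ≤ R` the left side
controls `R⁻¹ |∇ₓu|²` and `R⁻³ |u|²`. As `ψ_R ≤ 1/|x|`, a dyadic decomposition bounds the right side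
by `2 ‖f‖_{X*} ‖u‖_{X₁}`, uniformly in `R` (`pairing_le`). Taking suprema over `R`,
`‖∇ₓu‖_X² ≤ 4 ‖f‖_{X*} ‖u‖_{X₁}` and `‖u‖_{X₁}² ≤ 44 ‖f‖_{X*} ‖u‖_{X₁}`. Since `‖u‖_{X₁}` is finite
(`normX1_ne_top`), the second bound gives `‖u‖_{X₁} ≤ 44 ‖f‖_{X*}`, and the sum of the two left
sides is at most `48 · 44 ‖f‖_{X*}² ≤ 800 · 3² ‖f‖_{X*}²`.
-/

open MeasureTheory ENNReal Real

noncomputable section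

/-- Points of the waveguide ambient space `ℝ^n × ℝ^m`. -/
abbrev Pt (n m : ℕ) := EuclideanSpace ℝ (Fin n) × EuclideanSpace ℝ (Fin m)

variable {n m : ℕ}

/-- `L²` norm over a subset of `ℝ^{n+m}`. -/
def L2 {F : Type*} [NormedAddCommGroup F] (f : Pt n m → F) (S : Set (Pt n m)) : ℝ≥0∞ :=
  eLpNorm f 2 (volume.restrict S)

/-- Morrey–Campanato norm `‖f‖_X = sup_{R>0} R^{-1/2} ‖f‖_{L²(|x|≤R)}`. -/
def normX {F : Type*} [NormedAddCommGroup F] (f : Pt n m → F) : ℝ≥0∞ :=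
  ⨆ (R : ℝ) (_ : 0 < R), ENNReal.ofReal (R ^ (-(1:ℝ)/2)) * L2 f {p : Pt n m | ‖p.1‖ ≤ R}

/-- Morrey–Campanato norm `‖f‖_{X₁} = sup_{R>0} R^{-3/2} ‖f‖_{L²(|x|≤R)}`. -/
def normX1 {F : Type*} [NormedAddCommGroup F] (f : Pt n m → F) : ℝ≥0∞ :=
  ⨆ (R : ℝ) (_ : 0 < R), ENNReal.ofReal (R ^ (-(3:ℝ)/2)) * L2 f {p : Pt n m | ‖p.1‖ ≤ R}

/-- Dual Morrey–Campanato norm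
`‖f‖_{X*} = Σ_{j∈ℤ} 2^{j/2} ‖f‖_{L²(2^{j-1}≤|x|≤2^j)}`. -/
def normXstar {F : Type*} [NormedAddCommGroup F] (f : Pt n m → F) : ℝ≥0∞ :=
  ∑' j : ℤ, ENNReal.ofReal ((2:ℝ) ^ ((j:ℝ)/2)) *
    L2 f {p : Pt n m | (2:ℝ)^(j-1) ≤ ‖p.1‖ ∧ ‖p.1‖ ≤ (2:ℝ)^j}

/-- Standard basis vector in the `x` variables. -/
def ex (n m : ℕ) (i : Fin n) : Pt n m := (EuclideanSpace.single i 1, 0)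

/-- Standard basis vector in the `y` variables. -/
def ey (n m : ℕ) (i : Fin m) : Pt n m := (0, EuclideanSpace.single i 1)

/-- Laplacian in all `n+m` variables. -/
def lap (u : Pt n m → ℂ) (p : Pt n m) : ℂ :=
  (∑ i : Fin n, fderiv ℝ (fun q => fderiv ℝ u q (ex n m i)) p (ex n m i)) +
  ∑ i : Fin m, fderiv ℝ (fun q => fderiv ℝ u q (ey n m i)) p (ey n m i)

/-- Pointwise euclidean norm of the gradient in the `x` variables only. -/
def gradXnorm (u : Pt n m → ℂ) (p : Pt n m) : ℝ :=
  Real.sqrt (∑ i : Fin n, ‖fderiv ℝ u p (ex n m i)‖^2)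

/-- Pointwise squared euclidean norm of the full gradient. -/
def gradNormSq (u : Pt n m → ℂ) (p : Pt n m) : ℝ :=
  (∑ i : Fin n, ‖fderiv ℝ u p (ex n m i)‖^2) +
  ∑ i : Fin m, ‖fderiv ℝ u p (ey n m i)‖^2

/-- The right hand side `f := -Δu - (λ+iε)u + Vu` of the resolvent equation. -/
def resf (V : Pt n m → ℝ) (lam eps : ℝ) (u : Pt n m → ℂ) : Pt n m → ℂ :=
  fun p => -lap u p - (lam + eps * Complex.I) * u p + (V p : ℂ) * u p

/-- A repulsive potential: nonnegative, continuous, `C¹` in `x` for `x ≠ 0`, and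
`x·∇ₓ(|x| V) ≤ 0` for `x ≠ 0`. -/
structure IsRepulsive (V : Pt n m → ℝ) : Prop where
  nonneg : ∀ p, 0 ≤ V p
  continuous : Continuous V
  cdiff : ∀ y : EuclideanSpace ℝ (Fin m), ContDiffOn ℝ 1 (fun x => V (x, y)) {x | x ≠ 0}
  repulsive : ∀ (x : EuclideanSpace ℝ (Fin n)) (y : EuclideanSpace ℝ (Fin m)), x ≠ 0 →
    fderiv ℝ (fun x' : EuclideanSpace ℝ (Fin n) => ‖x'‖ * V (x', y)) x x ≤ 0

open scoped RealInnerProductSpace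

instance instHaarPt (n m : ℕ) : (volume : Measure (Pt n m)).IsAddHaarMeasure := by
  rw [Measure.volume_eq_prod]; infer_instance

/-! ### The weighted integration by parts -/

lemma integral_fderiv_zero {n m : ℕ} (F : Pt n m → ℝ) (hF : ContDiff ℝ 1 F)
    (hs : HasCompactSupport F) (e : Pt n m) : ∫ p, fderiv ℝ F p e = 0 := by
  have hc : Continuous (fun p => fderiv ℝ F p e) := by fun_prop
  have := integral_mul_fderiv_eq_neg_fderiv_mul_of_integrable (μ := (volume : Measure (Pt n m)))
    (f := fun _ => (1:ℝ)) (g := F) (v := e) (by simp)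
    (by simpa using hc.integrable_of_hasCompactSupport (hs.fderiv_apply ℝ e))
    (by simpa using hF.continuous.integrable_of_hasCompactSupport hs) (by fun_prop)
    (fun x _ => hF.differentiable (by simp) x)
  simpa using this

/-- The derivative along `e` of the flux `ψ Re(ū ∂ₑu) - ½ ∂ₑψ |u|²`: the two cross terms
`∂ₑψ Re(ū ∂ₑu)` cancel. The real inner product of `ℂ` is `⟪z, w⟫ = Re(z̄ w)`. -/
lemma weighted_div_eq {n m : ℕ} {u : Pt n m → ℂ} {ψ : Pt n m → ℝ} (hu : ContDiff ℝ (⊤ : ℕ∞) u)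
    (hψ : ContDiff ℝ (⊤ : ℕ∞) ψ) (e p : Pt n m) :
    fderiv ℝ (fun q => ψ q * ⟪u q, fderiv ℝ u q e⟫ - 1/2 * (fderiv ℝ ψ q e * ‖u q‖^2)) p e
    = ψ p * ‖fderiv ℝ u p e‖^2 + ψ p * ⟪u p, fderiv ℝ (fun q => fderiv ℝ u q e) p e⟫
      - 1/2 * (fderiv ℝ (fun q => fderiv ℝ ψ q e) p e * ‖u p‖^2) := by
  have hu' : ContDiff ℝ (⊤ : ℕ∞) (fun q => fderiv ℝ u q e) := by fun_prop
  have hψ' : ContDiff ℝ (⊤ : ℕ∞) (fun q => fderiv ℝ ψ q e) := by fun_prop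
  have h1 := (hu.differentiable (by simp) p).hasFDerivAt
  have h2 := (hu'.differentiable (by simp) p).hasFDerivAt
  have h3 := (hψ.differentiable (by simp) p).hasFDerivAt
  have h4 := (hψ'.differentiable (by simp) p).hasFDerivAt
  have := ((h3.mul (h1.inner ℝ h2)).sub ((h4.mul h1.norm_sq).const_mul (1/2))).fderiv
  erw [this]
  simp
  ring

lemma weighted_integral_eq {n m : ℕ} {u : Pt n m → ℂ} {ψ : Pt n m → ℝ}
    (hu : ContDiff ℝ (⊤ : ℕ∞) u) (hs : HasCompactSupport u)
    (hψ : ContDiff ℝ (⊤ : ℕ∞) ψ) (e : Pt n m) :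
    Integrable (fun p => ψ p * ‖fderiv ℝ u p e‖^2
      + ψ p * ⟪u p, fderiv ℝ (fun q => fderiv ℝ u q e) p e⟫
      - 1/2 * (fderiv ℝ (fun q => fderiv ℝ ψ q e) p e * ‖u p‖^2)) ∧
    ∫ p, (ψ p * ‖fderiv ℝ u p e‖^2 + ψ p * ⟪u p, fderiv ℝ (fun q => fderiv ℝ u q e) p e⟫
      - 1/2 * (fderiv ℝ (fun q => fderiv ℝ ψ q e) p e * ‖u p‖^2)) = 0 := by
  have hu' : ContDiff ℝ (⊤ : ℕ∞) (fun q => fderiv ℝ u q e) := by fun_prop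
  have hψ' : ContDiff ℝ (⊤ : ℕ∞) (fun q => fderiv ℝ ψ q e) := by fun_prop
  set F : Pt n m → ℝ := 
    fun q => ψ q * ⟪u q, fderiv ℝ u q e⟫ - 1/2 * (fderiv ℝ ψ q e * ‖u q‖^2) with hF
  have hFs : ContDiff ℝ 1 F := by
    have : ContDiff ℝ (⊤ : ℕ∞) F :=
      (hψ.mul (hu.inner ℝ hu')).sub (contDiff_const.mul (hψ'.mul (hu.norm_sq ℝ)))
    exact this.of_le (by exact_mod_cast le_top)
  have hFc : HasCompactSupport F := by
    refine hs.mono fun p hp => ?_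
    contrapose! hp
    simp only [Function.mem_support, not_not] at hp ⊢
    simp [hF, hp]
  simp_rw [← weighted_div_eq hu hψ e]
  refine ⟨?_, integral_fderiv_zero F hFs hFc e⟩
  exact Continuous.integrable_of_hasCompactSupport
    (f := fun p => fderiv ℝ F p e) (by fun_prop) (hFc.fderiv_apply ℝ e)

/-! ### The superharmonic weight -/

/-- The smooth weight `ψ_R(x, y) = (R² + |x|²)^{-1/2}`, a regularization at scale `R` of `1/|x|`. -/
def wt {n m : ℕ} (R : ℝ) (p : Pt n m) : ℝ := (R^2 + ‖p.1‖^2) ^ (-(1:ℝ)/2)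

section
variable {n m : ℕ} {R : ℝ}

lemma wt_base_pos (hR : 0 < R) (p : Pt n m) : 0 < R^2 + ‖p.1‖^2 := by positivity

lemma hasFDerivAt_base (a : ℝ) (hR : 0 < R) (p : Pt n m) :
    HasFDerivAt (fun q : Pt n m => (R^2 + ‖q.1‖^2) ^ a)
      ((a * (R^2 + ‖p.1‖^2) ^ (a-1)) • (2 • (innerSL ℝ p.1) ∘SL ContinuousLinearMap.fst ℝ _ _)) p :=
  ((hasFDerivAt_fst.norm_sq).const_add (R^2)).rpow_const (Or.inl (wt_base_pos hR p).ne')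

lemma wt_contDiff (hR : 0 < R) : ContDiff ℝ (⊤ : ℕ∞) (wt R : Pt n m → ℝ) :=
  ContDiff.rpow_const_of_ne (contDiff_const.add (contDiff_fst.norm_sq ℝ))
    fun p => (wt_base_pos hR p).ne'

lemma fderiv_wt (hR : 0 < R) (p e : Pt n m) :
    fderiv ℝ (wt R) p e = -((R^2 + ‖p.1‖^2) ^ (-(3:ℝ)/2) * ⟪p.1, e.1⟫) := by
  have := (hasFDerivAt_base (-(1:ℝ)/2) hR p).fderiv
  erw [this]
  norm_num
  ring_nf

lemma fderiv_fderiv_wt (hR : 0 < R) (p e : Pt n m) :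
    fderiv ℝ (fun q => fderiv ℝ (wt R) q e) p e
      = 3 * (R^2 + ‖p.1‖^2) ^ (-(5:ℝ)/2) * ⟪p.1, e.1⟫^2
        - (R^2 + ‖p.1‖^2) ^ (-(3:ℝ)/2) * ‖e.1‖^2 := by
  simp_rw [fderiv_wt hR]
  have h1 := (hasFDerivAt_fst (𝕜 := ℝ) (p := p)).inner ℝ (hasFDerivAt_const e.1 p)
  have := ((hasFDerivAt_base (-(3:ℝ)/2) hR p).mul h1).neg.fderiv
  erw [this]
  norm_num
  ring_nf

/-- Quantitative superharmonicity: `Δψ_R = -(n R² + (n - 3)|x|²)(R² + |x|²)^{-5/2}`, and `n ≥ 3`. -/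
lemma lap_wt_le (hn : 3 ≤ n) (hR : 0 < R) (p : Pt n m) :
    (∑ i : Fin n, fderiv ℝ (fun q => fderiv ℝ (wt R) q (ex n m i)) p (ex n m i)) +
      ∑ i : Fin m, fderiv ℝ (fun q => fderiv ℝ (wt R) q (ey n m i)) p (ey n m i)
      ≤ - (3 * R^2 * (R^2 + ‖p.1‖^2) ^ (-(5:ℝ)/2)) := by
  have hs := wt_base_pos hR p
  have h3 : (R^2 + ‖p.1‖^2) ^ (-(3:ℝ)/2) = (R^2 + ‖p.1‖^2) * (R^2 + ‖p.1‖^2) ^ (-(5:ℝ)/2) := by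
    conv_rhs => rw [← Real.rpow_one_add' hs.le (by norm_num)]
    norm_num
  have hc : 0 < (R^2 + ‖p.1‖^2) ^ (-(5:ℝ)/2) := Real.rpow_pos_of_pos hs _
  simp only [fderiv_fderiv_wt hR, ex, ey, EuclideanSpace.inner_single_right, inner_zero_right]
  simp [Finset.sum_sub_distrib, ← Finset.mul_sum, ← EuclideanSpace.real_norm_sq_eq]
  -- What is left is that `(n - 3) (R² + |x|²)` is nonnegative.
  rw [h3]
  have hn' : (3:ℝ) ≤ n := by exact_mod_cast hn
  have : 0 ≤ (R^2 + ‖p.1‖^2) ^ (-(5:ℝ)/2) * (((n:ℝ) - 3) * (R^2 + ‖p.1‖^2)) := by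
    have : 0 ≤ (n:ℝ) - 3 := by linarith
    positivity
  nlinarith

lemma le_wt (hR : 0 < R) (p : Pt n m) (hp : ‖p.1‖ ≤ R) : 1 / (2 * R) ≤ wt R p := by
  have h : R^2 + ‖p.1‖^2 ≤ (2*R)^(2:ℝ) := by
    norm_cast; nlinarith [norm_nonneg p.1]
  calc 1 / (2*R) = ((2*R)^(2:ℝ))^(-(1:ℝ)/2) := by
        rw [← Real.rpow_mul (by positivity)]; norm_num [Real.rpow_neg_one]
    _ ≤ _ := Real.rpow_le_rpow_of_nonpos (wt_base_pos hR p) h (by norm_num)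

lemma le_wt5 (hR : 0 < R) (p : Pt n m) (hp : ‖p.1‖ ≤ R) :
    1 / (32 * R^5) ≤ (R^2 + ‖p.1‖^2) ^ (-(5:ℝ)/2) := by
  have h : R^2 + ‖p.1‖^2 ≤ (2*R)^(2:ℝ) := by
    norm_cast; nlinarith [norm_nonneg p.1]
  calc 1 / (32*R^5) = ((2*R)^(2:ℝ))^(-(5:ℝ)/2) := by
        rw [← Real.rpow_mul (by positivity)]; norm_num
        rw [mul_pow, mul_inv, mul_comm]; norm_num
    _ ≤ _ := Real.rpow_le_rpow_of_nonpos (wt_base_pos hR p) h (by norm_num)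

lemma wt_le {r : ℝ} (hr : 0 < r) (p : Pt n m) (hp : r ≤ ‖p.1‖) : wt R p ≤ 1 / r := by
  have h : r^(2:ℝ) ≤ R^2 + ‖p.1‖^2 := by
    norm_cast; nlinarith [norm_nonneg p.1, sq_nonneg R]
  calc wt R p ≤ (r^(2:ℝ))^(-(1:ℝ)/2) :=
        Real.rpow_le_rpow_of_nonpos (by positivity) h (by norm_num)
    _ = 1 / r := by
        rw [← Real.rpow_mul (by positivity)]; norm_num [Real.rpow_neg_one]

lemma wt_nonneg (p : Pt n m) : 0 ≤ wt R p := by unfold wt; positivity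
end

/-! ### The energy inequality -/

lemma continuous_lap {n m : ℕ} {u : Pt n m → ℂ} (hu : ContDiff ℝ (⊤ : ℕ∞) u) :
    Continuous (lap u) := by
  have h : ∀ e : Pt n m, Continuous (fun p => fderiv ℝ (fun q => fderiv ℝ u q e) p e) := by
    intro e
    have hu' : ContDiff ℝ (⊤ : ℕ∞) (fun q => fderiv ℝ u q e) := by fun_prop
    exact (hu'.continuous_fderiv (by simp)).clm_apply continuous_const
  exact (continuous_finsetSum _ fun i _ => h _).add (continuous_finsetSum _ fun i _ => h _)

lemma continuous_resf {n m : ℕ} {V : Pt n m → ℝ} (hV : Continuous V) (lam eps : ℝ)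
    {u : Pt n m → ℂ} (hu : ContDiff ℝ (⊤ : ℕ∞) u) : Continuous (resf V lam eps u) := by
  have := continuous_lap hu
  have := hu.continuous
  unfold resf
  fun_prop

/-- The term `iε|u|²` is purely imaginary, so `ε` disappears from `Re(ū f)`. -/
lemma re_resf {n m : ℕ} (V : Pt n m → ℝ) (lam eps : ℝ) (u : Pt n m → ℂ) (p : Pt n m) :
    ⟪u p, resf V lam eps u p⟫ = -⟪u p, lap u p⟫ - lam * ‖u p‖^2 + V p * ‖u p‖^2 := by
  rw [← real_inner_self_eq_norm_sq]
  simp only [Complex.inner, resf]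
  simp
  ring

/-- Real part of the equation tested against `ψ_R ū`. The terms `-λψ_R|u|²` and `ψ_R V|u|²` are
nonnegative and are dropped. -/
lemma energy {n m : ℕ} (hn : 3 ≤ n) {V : Pt n m → ℝ} (hV : ∀ p, 0 ≤ V p) (hVc : Continuous V)
    {lam : ℝ} (eps : ℝ) (hlam : lam ≤ 0) {u : Pt n m → ℂ}
    (hu : ContDiff ℝ (⊤ : ℕ∞) u) (hs : HasCompactSupport u) {R : ℝ} (hR : 0 < R) :
    ∫⁻ p, ENNReal.ofReal (wt R p * gradNormSq u p
        + 3 / 2 * R^2 * (R^2 + ‖p.1‖^2) ^ (-(5:ℝ)/2) * ‖u p‖^2)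
      ≤ ∫⁻ p, ENNReal.ofReal (wt R p) * (‖resf V lam eps u p‖ₑ * ‖u p‖ₑ) := by
  have hw := wt_contDiff (n := n) (m := m) hR
  have hwc := hw.continuous
  have huc := hu.continuous
  have hfc := continuous_resf hVc lam eps hu
  have hgc : Continuous (gradNormSq u) := by
    have : Continuous (fderiv ℝ u) := hu.continuous_fderiv (by simp)
    unfold gradNormSq
    fun_prop
  have hbc : Continuous fun p : Pt n m => (R^2 + ‖p.1‖^2) ^ (-(5:ℝ)/2) :=
    Continuous.rpow_const (by fun_prop) fun p => Or.inl (wt_base_pos hR p).ne'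
  have hgs : HasCompactSupport (gradNormSq u) := by
    refine (hs.fderiv ℝ).mono fun p hp => ?_
    contrapose! hp
    simp only [Function.mem_support, not_not] at hp ⊢
    simp [gradNormSq, hp]
  set A : Pt n m → ℝ := fun p => wt R p * gradNormSq u p
        + 3 / 2 * R^2 * (R^2 + ‖p.1‖^2) ^ (-(5:ℝ)/2) * ‖u p‖^2 with hA
  set B : Pt n m → ℝ := fun p => wt R p * (‖resf V lam eps u p‖ * ‖u p‖) with hB
  have hAi : Integrable A := by
    refine Continuous.integrable_of_hasCompactSupport (by fun_prop) ?_
    refine (hgs.mul_left (f := wt R)).add ?_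
    refine hs.mono fun p hp => ?_
    contrapose! hp
    simp only [Function.mem_support, not_not] at hp ⊢
    simp [hp]
  have hBi : Integrable B := by
    refine Continuous.integrable_of_hasCompactSupport (by fun_prop) ?_
    refine hs.mono fun p hp => ?_
    contrapose! hp
    simp only [Function.mem_support, not_not] at hp ⊢
    simp [hB, hp]
  have hA0 : ∀ p, 0 ≤ A p := by
    intro p
    have := wt_nonneg (R := R) p
    have : 0 ≤ gradNormSq u p := by unfold gradNormSq; positivity
    simp only [hA]
    positivity
  have hB0 : ∀ p, 0 ≤ B p := fun p => mul_nonneg (wt_nonneg p) (by positivity)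
  -- `D e` is the divergence of the flux in the direction `e`, and `T` the sum over the basis.
  set D : Pt n m → Pt n m → ℝ := fun e p => wt R p * ‖fderiv ℝ u p e‖^2
      + wt R p * ⟪u p, fderiv ℝ (fun q => fderiv ℝ u q e) p e⟫
      - 1/2 * (fderiv ℝ (fun q => fderiv ℝ (wt R) q e) p e * ‖u p‖^2) with hD
  have hDi : ∀ e, Integrable (D e) := fun e => (weighted_integral_eq hu hs hw e).1
  have hD0 : ∀ e, ∫ p, D e p = 0 := fun e => (weighted_integral_eq hu hs hw e).2
  set T : Pt n m → ℝ := fun p => (∑ i, D (ex n m i) p) + ∑ i, D (ey n m i) p with hT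
  have hTi1 : Integrable fun p => ∑ i, D (ex n m i) p := integrable_finsetSum _ fun i _ => hDi _
  have hTi2 : Integrable fun p => ∑ i, D (ey n m i) p := integrable_finsetSum _ fun i _ => hDi _
  have hT0 : ∫ p, T p = 0 := by
    rw [hT, integral_add hTi1 hTi2, integral_finsetSum _ fun i _ => hDi _,
      integral_finsetSum _ fun i _ => hDi _]
    simp [hD0]
  have hTeq : ∀ p, T p = wt R p * gradNormSq u p + wt R p * ⟪u p, lap u p⟫
      - 1/2 * (((∑ i : Fin n, fderiv ℝ (fun q => fderiv ℝ (wt R) q (ex n m i)) p (ex n m i)) +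
      ∑ i : Fin m, fderiv ℝ (fun q => fderiv ℝ (wt R) q (ey n m i)) p (ey n m i)) * ‖u p‖^2) := by
    intro p
    simp only [hT, hD, Finset.sum_add_distrib, Finset.sum_sub_distrib, ← Finset.mul_sum,
      ← Finset.sum_mul, gradNormSq, lap, inner_add_right, inner_sum]
    ring
  have key : ∀ p, A p ≤ B p + T p := by
    intro p
    have h1 := lap_wt_le (m := m) hn hR p
    have h2 := re_resf V lam eps u p
    have h3 : ⟪u p, resf V lam eps u p⟫ ≤ ‖resf V lam eps u p‖ * ‖u p‖ := by
      rw [mul_comm]; exact real_inner_le_norm _ _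
    have h4 := wt_nonneg (R := R) p
    have h5 := mul_le_mul_of_nonneg_right h1 (sq_nonneg ‖u p‖)
    have h6 : 0 ≤ wt R p * (V p * ‖u p‖^2 - lam * ‖u p‖^2) := by
      have := hV p
      refine mul_nonneg h4 ?_
      nlinarith [sq_nonneg ‖u p‖, mul_nonneg this (sq_nonneg ‖u p‖)]
    have h7 := mul_le_mul_of_nonneg_left h3 h4
    rw [h2] at h7
    rw [hTeq p]
    simp only [hA, hB]
    nlinarith
  have hle : ∫ p, A p ≤ ∫ p, B p := by
    calc ∫ p, A p ≤ ∫ p, (B p + T p) := integral_mono hAi (hBi.add (hTi1.add hTi2)) key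
      _ = ∫ p, B p := by
        rw [integral_add hBi (show Integrable T from hTi1.add hTi2), hT0, add_zero]
  calc ∫⁻ p, ENNReal.ofReal (A p) = ENNReal.ofReal (∫ p, A p) :=
        (ofReal_integral_eq_lintegral_ofReal hAi (.of_forall hA0)).symm
    _ ≤ ENNReal.ofReal (∫ p, B p) := ENNReal.ofReal_le_ofReal hle
    _ = ∫⁻ p, ENNReal.ofReal (B p) := ofReal_integral_eq_lintegral_ofReal hBi (.of_forall hB0)
    _ = _ := by
      refine lintegral_congr fun p => ?_
      rw [hB, ENNReal.ofReal_mul (wt_nonneg p), ENNReal.ofReal_mul (norm_nonneg _)]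
      simp

/-! ### Estimates in the Morrey–Campanato norms -/

lemma L2_sq {n m : ℕ} {F : Type*} [NormedAddCommGroup F] (f : Pt n m → F) (S : Set (Pt n m)) :
    L2 f S ^ 2 = ∫⁻ p in S, ‖f p‖ₑ ^ 2 := by
  have := eLpNorm_nnreal_pow_eq_lintegral (μ := volume.restrict S) (f := f) (p := 2) (by simp)
  simpa [L2] using this

lemma ofReal_rpow_half_sq {R : ℝ} (hR : 0 < R) (k : ℕ) :
    ENNReal.ofReal (R ^ (-(k:ℝ)/2)) ^ 2 = ENNReal.ofReal ((R ^ k)⁻¹) := by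
  rw [← ENNReal.ofReal_pow (by positivity), ← Real.rpow_natCast (R ^ (-(k:ℝ)/2)),
    ← Real.rpow_mul hR.le]
  congr 1
  rw [← Real.rpow_natCast R k, ← Real.rpow_neg hR.le]
  congr 1
  push_cast
  ring

lemma ofNat_mul_ofReal (k : ℕ) [k.AtLeastTwo] (x : ℝ) :
    (OfNat.ofNat k : ℝ≥0∞) * ENNReal.ofReal x = ENNReal.ofReal (OfNat.ofNat k * x) := by
  rw [ENNReal.ofReal_mul (Nat.ofNat_nonneg k), ENNReal.ofReal_ofNat]

lemma iSup_sq_le {f : ℝ → ℝ≥0∞} {K : ℝ≥0∞} (h : ∀ R, 0 < R → f R ^ 2 ≤ K) :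
    (⨆ (R : ℝ) (_ : 0 < R), f R) ^ 2 ≤ K := by
  simp only [ENNReal.iSup_pow_of_ne_zero two_ne_zero]
  exact iSup₂_le h

/-- For `n ≥ 3` the volume of `{|x| ≤ R} ∩ supp u` is `O(R³)` for all `R`, so `‖u‖_{X₁}` is finite;
this is what allows it to be absorbed. -/
lemma normX1_ne_top {n m : ℕ} (hn : 3 ≤ n) {u : Pt n m → ℂ} (hu : Continuous u)
    (hs : HasCompactSupport u) : normX1 u ≠ ∞ := by
  obtain ⟨C, hC⟩ := hs.exists_bound_of_continuous hu
  obtain ⟨K, hK0, hK⟩ := hs.isBounded.subset_closedBall_lt 0 0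
  set v := volume (Metric.closedBall (0 : EuclideanSpace ℝ (Fin m)) K)
  set w := volume (Metric.ball (0 : EuclideanSpace ℝ (Fin n)) 1)
  have hv : v ≠ ∞ := measure_closedBall_lt_top.ne
  have hw : w ≠ ∞ := measure_ball_lt_top.ne
  suffices h : normX1 u ^ 2 ≤ ENNReal.ofReal C ^ 2 * (ENNReal.ofReal (K ^ (n-3)) * w * v) by
    intro htop
    rw [htop] at h
    simp only [ne_eq, OfNat.ofNat_ne_zero, not_false_eq_true, ENNReal.top_pow, top_le_iff] at h
    exact (ENNReal.mul_ne_top (by simp) (ENNReal.mul_ne_top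
      (ENNReal.mul_ne_top (by simp) hw) hv)) h
  refine iSup_sq_le fun R hR => ?_
  have h3 := ofReal_rpow_half_sq hR 3
  push_cast at h3
  rw [mul_pow, h3, L2_sq]
  -- `Q` contains the part of the support of `u` that lies in `|x| ≤ R`.
  set Q : Set (Pt n m) := Metric.closedBall 0 (min R K) ×ˢ Metric.closedBall 0 K
  have hQ : volume Q = ENNReal.ofReal ((min R K)^n) * w * v := by
    rw [Measure.volume_eq_prod, Measure.prod_prod, Measure.addHaar_closedBall _ _ (by positivity)]
    simp [w, v]
  have hint : ∫⁻ p in {p : Pt n m | ‖p.1‖ ≤ R}, ‖u p‖ₑ ^ 2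
      ≤ ENNReal.ofReal C ^ 2 * volume Q := by
    have hQm : MeasurableSet Q :=
      (Metric.isClosed_closedBall.prod Metric.isClosed_closedBall).measurableSet
    have hSm : MeasurableSet {p : Pt n m | ‖p.1‖ ≤ R} :=
      (isClosed_le (by fun_prop) (by fun_prop)).measurableSet
    rw [← lintegral_indicator hSm, ← setLIntegral_const, ← lintegral_indicator hQm]
    refine lintegral_mono fun p => ?_
    by_cases hp : p ∈ {p : Pt n m | ‖p.1‖ ≤ R}
    · rw [Set.indicator_of_mem hp]
      by_cases hp2 : p ∈ tsupport u
      · have h2 := hK hp2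
        rw [mem_closedBall_zero_iff, Prod.norm_def] at h2
        have hpQ : p ∈ Q := by
          simp only [Q, Set.mem_prod, mem_closedBall_zero_iff]
          exact ⟨le_min hp ((le_max_left _ _).trans h2), (le_max_right _ _).trans h2⟩
        rw [Set.indicator_of_mem hpQ]
        gcongr
        rw [← ofReal_norm]
        exact ENNReal.ofReal_le_ofReal (hC p)
      · simp [image_eq_zero_of_notMem_tsupport hp2]
    · simp [Set.indicator_of_notMem hp]
  calc ENNReal.ofReal ((R^3)⁻¹) * ∫⁻ p in {p : Pt n m | ‖p.1‖ ≤ R}, ‖u p‖ₑ ^ 2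
      ≤ ENNReal.ofReal ((R^3)⁻¹) * (ENNReal.ofReal C ^ 2 * (ENNReal.ofReal ((min R K)^n) * w * v)) := by
        rw [← hQ]; gcongr
    _ = ENNReal.ofReal C ^ 2 * ((ENNReal.ofReal ((R^3)⁻¹) * ENNReal.ofReal ((min R K)^n)) * w * v) := by
        ring
    _ ≤ _ := by
        gcongr
        rw [← ENNReal.ofReal_mul (by positivity)]
        apply ENNReal.ofReal_le_ofReal
        rw [inv_mul_le_iff₀ (by positivity)]
        calc (min R K)^n = (min R K)^3 * (min R K)^(n-3) := by rw [← pow_add]; congr 1; omega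
          _ ≤ R^3 * K^(n-3) := by
            have : 0 ≤ min R K := by positivity
            gcongr
            · exact min_le_left _ _
            · exact min_le_right _ _

lemma ae_fst_ne_zero {n m : ℕ} (hn : 3 ≤ n) : ∀ᵐ p : Pt n m, p.1 ≠ 0 := by
  have : Nonempty (Fin n) := ⟨⟨0, by omega⟩⟩
  have h : {p : Pt n m | ¬ p.1 ≠ 0} = ({0} : Set (EuclideanSpace ℝ (Fin n))) ×ˢ Set.univ := by
    ext p; simp
  rw [ae_iff, h, Measure.volume_eq_prod, Measure.prod_prod]
  simp

/-- Since `ψ_R ≤ 1/|x|`, Cauchy–Schwarz on each shell `2^{j-1} ≤ |x| ≤ 2^j` loses the factor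
`2^{1-j}`, while `‖u‖_{L²} ≤ 2^{3j/2} ‖u‖_{X₁}` there; together this is the weight `2 · 2^{j/2}`
of the dual norm. The shells miss only the null set `x = 0`. -/
lemma pairing_le {n m : ℕ} (hn : 3 ≤ n) {f u : Pt n m → ℂ} (hf : Continuous f)
    (hu : Continuous u) (R : ℝ) :
    ∫⁻ p, ENNReal.ofReal (wt R p) * (‖f p‖ₑ * ‖u p‖ₑ) ≤ 2 * normXstar f * normX1 u := by
  set S : ℤ → Set (Pt n m) := fun j => {p | (2:ℝ)^(j-1) ≤ ‖p.1‖ ∧ ‖p.1‖ ≤ (2:ℝ)^j} with hS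
  have hSm : ∀ j, MeasurableSet (S j) := fun j => by
    have h : S j = {p | (2:ℝ)^(j-1) ≤ ‖p.1‖} ∩ {p | ‖p.1‖ ≤ (2:ℝ)^j} := by ext; simp [hS]
    rw [h]
    exact (measurableSet_le (by fun_prop) (by fun_prop)).inter
      (measurableSet_le (by fun_prop) (by fun_prop))
  have hcov : ∀ᵐ p : Pt n m, p ∈ ⋃ j, S j := by
    filter_upwards [ae_fst_ne_zero hn] with p hp
    obtain ⟨k, hk⟩ := exists_mem_Ioc_zpow (norm_pos_iff.2 hp) (one_lt_two (α := ℝ))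
    refine Set.mem_iUnion.2 ⟨k+1, ?_⟩
    simp only [hS, Set.mem_ofPred_eq, add_sub_cancel_right]
    exact ⟨hk.1.le, hk.2⟩
  rw [← Measure.restrict_eq_self_of_ae_mem hcov]
  refine (lintegral_iUnion_le _ _).trans ?_
  rw [normXstar, ← ENNReal.tsum_mul_left, ← ENNReal.tsum_mul_right]
  refine ENNReal.tsum_le_tsum fun j => ?_
  have h2j : (0:ℝ) < 2^j := by positivity
  have hw : ∀ p ∈ S j, ENNReal.ofReal (wt R p) ≤ ENNReal.ofReal (2 / 2^j) := by
    intro p hp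
    apply ENNReal.ofReal_le_ofReal
    refine (wt_le (r := 2^(j-1)) (by positivity) p hp.1).trans (le_of_eq ?_)
    rw [zpow_sub_one₀ (by norm_num)]
    field_simp
  have hol : ∫⁻ p in S j, ‖f p‖ₑ * ‖u p‖ₑ ≤ L2 f (S j) * L2 u (S j) := by
    have := ENNReal.lintegral_mul_le_Lp_mul_Lq (volume.restrict (S j))
      Real.HolderConjugate.two_two (f := fun p => ‖f p‖ₑ) (g := fun p => ‖u p‖ₑ)
      (by fun_prop) (by fun_prop)
    simpa [L2, eLpNorm_eq_eLpNorm' two_ne_zero ofNat_ne_top, eLpNorm'] using this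
  have hu1 : L2 u (S j) ≤ ENNReal.ofReal (((2:ℝ)^j)^((3:ℝ)/2)) * normX1 u := by
    have h1 : L2 u (S j) ≤ L2 u {p : Pt n m | ‖p.1‖ ≤ 2^j} :=
      eLpNorm_mono_measure _ (Measure.restrict_mono (fun p hp => hp.2) le_rfl)
    refine h1.trans ?_
    have h2 : ENNReal.ofReal (((2:ℝ)^j)^(-(3:ℝ)/2)) * L2 u {p : Pt n m | ‖p.1‖ ≤ 2^j} ≤ normX1 u :=
      le_iSup₂ (f := fun (R : ℝ) (_ : 0 < R) => ENNReal.ofReal (R ^ (-(3:ℝ)/2)) *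
        L2 u {p : Pt n m | ‖p.1‖ ≤ R}) (2^j) h2j
    refine le_trans (le_of_eq ?_) (mul_le_mul_right h2 _)
    rw [← mul_assoc, ← ENNReal.ofReal_mul (by positivity), ← Real.rpow_add h2j]
    norm_num
  calc ∫⁻ p in S j, ENNReal.ofReal (wt R p) * (‖f p‖ₑ * ‖u p‖ₑ)
      ≤ ∫⁻ p in S j, ENNReal.ofReal (2 / 2^j) * (‖f p‖ₑ * ‖u p‖ₑ) :=
        setLIntegral_mono' (hSm j) fun p hp => mul_le_mul_left (hw p hp) _
    _ = ENNReal.ofReal (2 / 2^j) * ∫⁻ p in S j, ‖f p‖ₑ * ‖u p‖ₑ :=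
        lintegral_const_mul' _ _ ENNReal.ofReal_ne_top
    _ ≤ ENNReal.ofReal (2 / 2^j) * (L2 f (S j) *
          (ENNReal.ofReal (((2:ℝ)^j)^((3:ℝ)/2)) * normX1 u)) := by gcongr; exact hol.trans (by gcongr)
    _ = ENNReal.ofReal (2 / 2^j) * ENNReal.ofReal (((2:ℝ)^j)^((3:ℝ)/2)) * L2 f (S j) * normX1 u := by
        ring
    _ = 2 * (ENNReal.ofReal ((2:ℝ)^((j:ℝ)/2)) * L2 f (S j)) * normX1 u := by
        rw [← mul_assoc 2]
        congr 2
        rw [← ENNReal.ofReal_mul (by positivity), ← ENNReal.ofReal_ofNat, ← ENNReal.ofReal_mul (by norm_num)]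
        congr 1
        rw [← Real.rpow_intCast, ← Real.rpow_mul (by norm_num), div_mul_eq_mul_div, mul_div_assoc,
          ← Real.rpow_sub (by norm_num)]
        ring_nf

/-- the case `λ ≤ 0` of the resolvent estimate. -/
theorem resolvent_estimate_nonpos (n m : ℕ) (hn : 3 ≤ n) (hm : 1 ≤ m)
    (V : Pt n m → ℝ) (hV : IsRepulsive V)
    (lam eps : ℝ) (hlam : lam ≤ 0) (u : Pt n m → ℂ)
    (hu : ContDiff ℝ (⊤ : ℕ∞) u) (hsupp : HasCompactSupport u) :
    normX (fun p => gradXnorm u p) ^ 2 + normX1 u ^ 2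
      ≤ 800 * (n : ℝ≥0∞) ^ 2 * normXstar (resf V lam eps u) ^ 2 := by
  set N := normXstar (resf V lam eps u) with hN
  set U := normX1 u with hU
  have hmain : ∀ R : ℝ, 0 < R → ∫⁻ p in {p : Pt n m | ‖p.1‖ ≤ R},
      ENNReal.ofReal (wt R p * gradNormSq u p
        + 3 / 2 * R^2 * (R^2 + ‖p.1‖^2) ^ (-(5:ℝ)/2) * ‖u p‖^2) ≤ 2 * N * U := fun R hR =>
    (setLIntegral_le_lintegral _ _).trans <|
      (energy hn hV.nonneg hV.continuous eps hlam hu hsupp hR).trans <|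
        pairing_le hn (continuous_resf hV.continuous lam eps hu) hu.continuous R
  have hSm : ∀ R : ℝ, MeasurableSet {p : Pt n m | ‖p.1‖ ≤ R} := fun R =>
    (isClosed_le (by fun_prop) (by fun_prop)).measurableSet
  have hg0 : ∀ p, 0 ≤ gradNormSq u p := fun p => by unfold gradNormSq; positivity
  -- On `|x| ≤ R` the weight is at least `1/(2R)`, hence the factor `2` below.
  have hG : normX (fun p => gradXnorm u p) ^ 2 ≤ 4 * (N * U) := by
    refine iSup_sq_le fun R hR => ?_
    have h1 := ofReal_rpow_half_sq hR 1
    push_cast at h1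
    rw [mul_pow, h1, L2_sq, ← lintegral_const_mul' _ _ ENNReal.ofReal_ne_top]
    calc _ ≤ ∫⁻ p in {p : Pt n m | ‖p.1‖ ≤ R}, 2 * ENNReal.ofReal (wt R p * gradNormSq u p
        + 3 / 2 * R^2 * (R^2 + ‖p.1‖^2) ^ (-(5:ℝ)/2) * ‖u p‖^2) := by
          refine setLIntegral_mono' (hSm R) fun p hp => ?_
          rw [← ofReal_norm, ← ENNReal.ofReal_pow (norm_nonneg _),
            ← ENNReal.ofReal_mul (by positivity), ofNat_mul_ofReal]
          apply ENNReal.ofReal_le_ofReal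
          have e1 := le_wt hR p hp
          have e2 : ‖gradXnorm u p‖^2 ≤ gradNormSq u p := by
            rw [Real.norm_eq_abs, sq_abs, gradXnorm, Real.sq_sqrt (by positivity), gradNormSq]
            have : 0 ≤ ∑ i : Fin m, ‖fderiv ℝ u p (ey n m i)‖^2 := by positivity
            linarith
          have e3 : 0 ≤ 3 / 2 * R^2 * (R^2 + ‖p.1‖^2) ^ (-(5:ℝ)/2) * ‖u p‖^2 := by positivity
          have e4 : (R^1)⁻¹ = 2 * (1 / (2*R)) := by field_simp
          have e5 := mul_le_mul e1 e2 (by positivity) (wt_nonneg p)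
          rw [e4]
          nlinarith
      _ = 2 * ∫⁻ p in {p : Pt n m | ‖p.1‖ ≤ R}, ENNReal.ofReal (wt R p * gradNormSq u p
        + 3 / 2 * R^2 * (R^2 + ‖p.1‖^2) ^ (-(5:ℝ)/2) * ‖u p‖^2) :=
          lintegral_const_mul' _ _ (by simp)
      _ ≤ 2 * (2 * N * U) := by gcongr; exact hmain R hR
      _ = 4 * (N * U) := by ring
  -- On `|x| ≤ R` the zero-order coefficient is at least `3/(64 R³)`, and `22 · 3/64 ≥ 1`.
  have hUU : U ^ 2 ≤ 44 * (N * U) := by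
    refine iSup_sq_le fun R hR => ?_
    have h1 := ofReal_rpow_half_sq hR 3
    push_cast at h1
    rw [mul_pow, h1, L2_sq, ← lintegral_const_mul' _ _ ENNReal.ofReal_ne_top]
    calc _ ≤ ∫⁻ p in {p : Pt n m | ‖p.1‖ ≤ R}, 22 * ENNReal.ofReal (wt R p * gradNormSq u p
        + 3 / 2 * R^2 * (R^2 + ‖p.1‖^2) ^ (-(5:ℝ)/2) * ‖u p‖^2) := by
          refine setLIntegral_mono' (hSm R) fun p hp => ?_
          rw [← ofReal_norm, ← ENNReal.ofReal_pow (norm_nonneg _),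
            ← ENNReal.ofReal_mul (by positivity), ofNat_mul_ofReal]
          apply ENNReal.ofReal_le_ofReal
          have e1 := le_wt5 hR p hp
          have e3 : 0 ≤ wt R p * gradNormSq u p := mul_nonneg (wt_nonneg p) (hg0 p)
          have e4 : (R^3)⁻¹ ≤ 22 * (3 / 2 * R^2 * (1 / (32 * R^5))) := by
            have : 22 * (3 / 2 * R^2 * (1 / (32 * R^5))) = 33/32 * (R^3)⁻¹ := by field_simp; norm_num
            have : 0 < (R^3)⁻¹ := by positivity
            linarith
          calc (R^3)⁻¹ * ‖u p‖^2 ≤ 22 * (3 / 2 * R^2 * (1 / (32 * R^5))) * ‖u p‖^2 := by gcongr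
            _ ≤ 22 * (3 / 2 * R^2 * (R^2 + ‖p.1‖^2) ^ (-(5:ℝ)/2)) * ‖u p‖^2 := by gcongr
            _ ≤ _ := by linarith
      _ = 22 * ∫⁻ p in {p : Pt n m | ‖p.1‖ ≤ R}, ENNReal.ofReal (wt R p * gradNormSq u p
        + 3 / 2 * R^2 * (R^2 + ‖p.1‖^2) ^ (-(5:ℝ)/2) * ‖u p‖^2) :=
          lintegral_const_mul' _ _ (by simp)
      _ ≤ 22 * (2 * N * U) := by gcongr; exact hmain R hR
      _ = 44 * (N * U) := by ring
  have hUle : U ≤ 44 * N := by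
    rcases eq_or_ne U 0 with h0 | h0
    · simp [h0]
    · refine (ENNReal.mul_le_mul_iff_left h0 (normX1_ne_top hn hu.continuous hsupp)).1 ?_
      rw [← sq, mul_assoc]; exact hUU
  have hn' : (3 : ℝ≥0∞) ≤ n := by exact_mod_cast hn
  calc _ ≤ 4 * (N * U) + 44 * (N * U) := add_le_add hG hUU
    _ = 48 * (N * U) := by ring
    _ ≤ 48 * (N * (44 * N)) := by gcongr
    _ = 2112 * N ^ 2 := by ring
    _ ≤ 800 * 3 ^ 2 * N ^ 2 := by gcongr; norm_num
    _ ≤ _ := by gcongr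
end
end

section
/- Let n ≥ 3, m ≥ 1, let V be a repulsive potential, λ, ε ∈ ℝ, u ∈ C_c^∞(ℝ^n × ℝ^m; ℂ), and f := -Δu - (λ+iε)u + Vu. Then for all R, S > 0, ‖⟨x⟩_R^{-3}·u‖_{L²(ℝ^{n+m})} ≤ 2^{13}·n·‖⟨x⟩_S·f‖_{L²(ℝ^{n+m})}. (Weighted L² form of the resolvent estimate, corresponding to the paper's estimate for ⟨x⟩_R^{-3} R(z) applied to f.) -/
/-!
The hypotheses force `V = 0`: on each ray `t ↦ |tx| V(tx, y)` is nonincreasing and vanishes at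
`t = 0`, while `V ≥ 0` (`potential_eq_zero`). The claim is therefore a weighted resolvent estimate
for the free Laplacian, uniform in the spectral parameter `z = λ + iε`.

Since `⟨x⟩_R` and `⟨x⟩_S` are monotone in `|x|`, keeping only three of the `x` coordinates and
treating all the other variables as transversal variables `y` gives a stronger inequality, so
`n = 3` may be assumed (`resolvent_sq`). After a Fourier transform in `y`, the equation
`-Δv - zv = g` becomes `(-Δ_x - κ²) v̂(·, η) = ĝ(·, η)` on `ℝ³` with `κ² = z - 4π²|η|²`. Choosing
`Im κ ≥ 0`, the solution is the convolution with `e^{iκ|x|} / (4π|x|)`, whose modulus is at most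
`1 / (4π|x|)` for every `κ`. The formula is obtained by testing with the smooth regularisation
`e^{iκρ}/ρ`, `ρ² = d² + |x - a|²` (`green`), and letting `d → 0` (`tendsto_kern`). Cauchy–Schwarz and
`∫ |x - a|⁻² ⟨x⟩_S⁻² dx ≤ 4π²` (`lintegral_two_center`) bound `|v̂(a, η)|²` by
`4π² ‖⟨x⟩_S ĝ(·, η)‖²` (`pF_bound`), and Plancherel in `y` gives
`‖v(a, ·)‖² ≤ 4π² ‖⟨x⟩_S g‖²` for every `a` (`slice_bound`). Finally `⟨x⟩_R⁻⁶` has integral at most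
`2π²` over `ℝ³`, uniformly in `R` (`resolvent_three`), so the squared constant is `8π⁴`, far below
`(2¹³ n)²`.
-/

open MeasureTheory ENNReal Real

noncomputable section

variable {n m : ℕ}

namespace WeightedResolvent

open Filter Topology Set Module

/-! ### Repulsive potentials vanish -/

/-- A repulsive potential vanishes identically: `t ↦ |tx| V(tx, y)` is continuous on `[0, ∞)`,
nonincreasing, and zero at `t = 0`, so it is nonpositive, whereas `V ≥ 0`. -/
theorem potential_eq_zero {n m : ℕ} (hn : 0 < n) {V : Pt n m → ℝ} (hV : IsRepulsive V) (p : Pt n m) :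
    V p = 0 := by
  have main : ∀ (x : EuclideanSpace ℝ (Fin n)) (y : EuclideanSpace ℝ (Fin m)), x ≠ 0 →
      V (x, y) = 0 := by
    intro x y hx
    set h : EuclideanSpace ℝ (Fin n) → ℝ := fun x' => ‖x'‖ * V (x', y) with hh
    have hdiff : ∀ x' : EuclideanSpace ℝ (Fin n), x' ≠ 0 → DifferentiableAt ℝ h x' := by
      intro x' hx'
      have h1 : DifferentiableAt ℝ (fun x => V (x, y)) x' :=
        ((hV.cdiff y).differentiableOn (by norm_num)).differentiableAt
          (isOpen_ne.mem_nhds hx')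
      exact (differentiableAt_id.norm ℝ hx').mul h1
    have hcont : Continuous h := by
      have := hV.continuous
      fun_prop
    have hder : ∀ t : ℝ, 0 < t → HasDerivAt (fun t : ℝ => h (t • x)) (fderiv ℝ h (t • x) x) t := by
      intro t ht
      have h2 : HasDerivAt (fun t : ℝ => t • x) x t := by
        simpa using (hasDerivAt_id t).smul_const x
      exact (hdiff (t • x) (smul_ne_zero ht.ne' hx)).hasFDerivAt.comp_hasDerivAt t h2
    have hanti : AntitoneOn (fun t : ℝ => h (t • x)) (Ici 0) := by
      apply antitoneOn_of_deriv_nonpos (convex_Ici 0)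
      · exact (hcont.comp (by fun_prop)).continuousOn
      · intro t ht
        rw [interior_Ici] at ht
        exact (hder t ht).differentiableAt.differentiableWithinAt
      · intro t ht
        rw [interior_Ici] at ht
        have ht : 0 < t := ht
        rw [(hder t ht).deriv]
        have h3 := hV.repulsive (t • x) y (smul_ne_zero ht.ne' hx)
        rw [map_smul, smul_eq_mul] at h3
        exact nonpos_of_mul_nonpos_right h3 ht
    have h4 := hanti (by simp : (0:ℝ) ∈ Ici 0) (by simp : (1:ℝ) ∈ Ici 0) zero_le_one
    simp only [hh, one_smul, zero_smul, norm_zero, zero_mul] at h4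
    exact le_antisymm (nonpos_of_mul_nonpos_right h4 (norm_pos_iff.2 hx)) (hV.nonneg _)
  obtain ⟨x, y⟩ := p
  have : Nonempty (Fin n) := ⟨⟨0, hn⟩⟩
  have hc : Continuous fun x => V (x, y) := by
    have := hV.continuous
    fun_prop
  exact congrFun (Continuous.ext_on (dense_compl_singleton (0 : EuclideanSpace ℝ (Fin n)))
    hc (continuous_const (y := (0:ℝ))) (fun x hx => main x y hx)) x

/-! ### Weight integrals on three-space -/

/-- Three-dimensional Euclidean space. -/
abbrev E3 := EuclideanSpace ℝ (Fin 3)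

theorem lintegral_radial (f : ℝ → ℝ) (hf : ∀ r, 0 ≤ f r)
    (hint : IntegrableOn (fun r => r ^ 2 * f r) (Ioi 0)) :
    ∫⁻ x : E3, ENNReal.ofReal (f ‖x‖) =
      ENNReal.ofReal (4 * π * ∫ r in Ioi (0:ℝ), r ^ 2 * f r) := by
  have h1 : Integrable (fun x : E3 => f ‖x‖) := by
    rw [integrable_fun_norm_addHaar volume]
    simpa using hint
  rw [← ofReal_integral_eq_lintegral_ofReal h1 (Eventually.of_forall fun x => hf _),
    integral_fun_norm_addHaar volume]
  congr 1
  have : (volume : Measure E3).real (Metric.ball 0 1) = π * 4 / 3 := by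
    rw [Measure.real, EuclideanSpace.volume_ball_fin_three]
    simp only [ENNReal.ofReal_one, one_pow, one_mul]
    exact ENNReal.toReal_ofReal (by positivity)
  rw [this]
  simp
  ring

theorem integral_weight (S : ℝ) (hS : 0 < S) :
    IntegrableOn (fun r : ℝ => (S + r ^ 2 / S)⁻¹) (Ioi 0) ∧
      ∫ r in Ioi (0:ℝ), (S + r ^ 2 / S)⁻¹ = π / 2 := by
  have e : ∀ r : ℝ, (S + r ^ 2 / S)⁻¹ = S⁻¹ * (1 + (S⁻¹ * r) ^ 2)⁻¹ := by
    intro r; field_simp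
  simp_rw [e]
  constructor
  · exact ((integrable_inv_one_add_sq.comp_mul_left' (inv_pos.2 hS).ne').const_mul _).integrableOn
  · rw [integral_const_mul, integral_comp_mul_left_Ioi (fun r => (1 + r ^ 2)⁻¹) 0 (inv_pos.2 hS)]
    simp
    field_simp

/-- `∫ |x|⁻² ⟨x⟩_S⁻² dx = 2π²`, independently of `S`. -/
theorem lintegral_weight (S : ℝ) (hS : 0 < S) :
    ∫⁻ x : E3, ENNReal.ofReal ((‖x‖ ^ 2)⁻¹ * (S + ‖x‖ ^ 2 / S)⁻¹) = ENNReal.ofReal (2 * π ^ 2) := by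
  have e : ∀ r ∈ Ioi (0:ℝ), r ^ 2 * ((r ^ 2)⁻¹ * (S + r ^ 2 / S)⁻¹) = (S + r ^ 2 / S)⁻¹ := by
    intro r hr
    have : r ≠ 0 := (ne_of_gt hr)
    field_simp
  rw [lintegral_radial (fun r => (r ^ 2)⁻¹ * (S + r ^ 2 / S)⁻¹) (fun r => by positivity)
    ((integrableOn_congr_fun e measurableSet_Ioi).2 (integral_weight S hS).1),
    setIntegral_congr_fun measurableSet_Ioi e, (integral_weight S hS).2]
  congr 1; ring

/-- The output weight is integrable over `ℝ³` with a bound independent of `R`, because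
`⟨x⟩_R⁴ ≥ |x|²`. -/
theorem lintegral_weight_cube (R : ℝ) (hR : 0 < R) :
    ∫⁻ x : E3, ENNReal.ofReal ((R + ‖x‖ ^ 2 / R)⁻¹ ^ 3) ≤ ENNReal.ofReal (2 * π ^ 2) := by
  rw [← lintegral_weight R hR]
  have h0 : ∀ᵐ x : E3, x ≠ 0 := by
    simp [ae_iff]
  apply lintegral_mono_ae
  filter_upwards [h0] with x hx
  apply ENNReal.ofReal_le_ofReal
  have h1 : 0 < ‖x‖ := norm_pos_iff.2 hx
  rw [pow_succ]
  gcongr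
  rw [inv_pow]
  apply inv_anti₀ (by positivity)
  have h2 : (R + ‖x‖ ^ 2 / R) ^ 2 = R ^ 2 + ‖x‖ ^ 2 + ‖x‖ ^ 2 + (‖x‖ ^ 2 / R) ^ 2 := by
    field_simp; ring
  rw [h2]
  nlinarith [sq_nonneg R, sq_nonneg ‖x‖, sq_nonneg (‖x‖ ^ 2 / R)]

/-- The two-centre bound: splitting according to which of `|x|`, `|x - a|` is larger. -/
theorem lintegral_two_center (S : ℝ) (hS : 0 < S) (a : E3) :
    ∫⁻ x : E3, ENNReal.ofReal ((‖x - a‖ ^ 2)⁻¹ * (S + ‖x‖ ^ 2 / S)⁻¹) ≤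
      ENNReal.ofReal (4 * π ^ 2) := by
  have h0 : ∀ᵐ x : E3, x ≠ 0 := by simp [ae_iff]
  have h0' : ∀ᵐ x : E3, x ≠ a := by simp [ae_iff]
  calc ∫⁻ x : E3, ENNReal.ofReal ((‖x - a‖ ^ 2)⁻¹ * (S + ‖x‖ ^ 2 / S)⁻¹)
      ≤ ∫⁻ x : E3, (ENNReal.ofReal ((‖x‖ ^ 2)⁻¹ * (S + ‖x‖ ^ 2 / S)⁻¹) +
        ENNReal.ofReal ((‖x - a‖ ^ 2)⁻¹ * (S + ‖x - a‖ ^ 2 / S)⁻¹)) := by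
        apply lintegral_mono_ae
        filter_upwards [h0, h0'] with x hx hxa
        have h1 : 0 < ‖x‖ := norm_pos_iff.2 hx
        have h2 : 0 < ‖x - a‖ := norm_pos_iff.2 (sub_ne_zero.2 hxa)
        rcases le_total ‖x‖ ‖x - a‖ with h | h
        · refine le_trans (ENNReal.ofReal_le_ofReal ?_) le_self_add
          gcongr
        · refine le_trans (ENNReal.ofReal_le_ofReal ?_) le_add_self
          gcongr
    _ = ENNReal.ofReal (2 * π ^ 2) + ENNReal.ofReal (2 * π ^ 2) := by
        rw [lintegral_add_left (by fun_prop), lintegral_weight S hS,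
          lintegral_sub_right_eq_self
            (fun x : E3 => ENNReal.ofReal ((‖x‖ ^ 2)⁻¹ * (S + ‖x‖ ^ 2 / S)⁻¹)) a,
          lintegral_weight S hS]
    _ = ENNReal.ofReal (4 * π ^ 2) := by
        rw [← ENNReal.ofReal_add (by positivity) (by positivity)]
        congr 1; ring

/-! ### The regularised outgoing fundamental solution -/

/-- The outgoing radial profile `e^{iκρ}/ρ`, written as a function of `s = ρ²`. -/
def prof (κ : ℂ) (s : ℝ) : ℂ := Complex.exp (Complex.I * κ * √s) * (√s : ℂ)⁻¹

/-- First derivative of `prof` in `s`. -/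
def prof1 (κ : ℂ) (s : ℝ) : ℂ :=
  Complex.exp (Complex.I * κ * √s) *
    (Complex.I * κ / 2 * (√s : ℂ)⁻¹ ^ 2 - 1 / 2 * (√s : ℂ)⁻¹ ^ 3)

/-- Second derivative of `prof` in `s`. -/
def prof2 (κ : ℂ) (s : ℝ) : ℂ :=
  Complex.exp (Complex.I * κ * √s) *
    (-κ ^ 2 / 4 * (√s : ℂ)⁻¹ ^ 3 - 3 * Complex.I * κ / 4 * (√s : ℂ)⁻¹ ^ 4 +
      3 / 4 * (√s : ℂ)⁻¹ ^ 5)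

/-- The error kernel: `(-Δ - κ²)` applied to `e^{iκρ}/ρ` with `ρ² = s = d² + |x|²`. -/
def kern (κ : ℂ) (d s : ℝ) : ℂ :=
  Complex.exp (Complex.I * κ * √s) * d ^ 2 *
    (3 * (√s : ℂ)⁻¹ ^ 5 - 3 * Complex.I * κ * (√s : ℂ)⁻¹ ^ 4 - κ ^ 2 * (√s : ℂ)⁻¹ ^ 3)

theorem hasDerivAt_sqrtC {s : ℝ} (hs : 0 < s) :
    HasDerivAt (fun s : ℝ => (√s : ℂ)) (1 / 2 * (√s : ℂ)⁻¹) s := by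
  refine (Real.hasDerivAt_sqrt hs.ne').ofReal_comp.congr_deriv ?_
  push_cast; ring

theorem hasDerivAt_sqrtC_inv {s : ℝ} (hs : 0 < s) :
    HasDerivAt (fun s : ℝ => (√s : ℂ)⁻¹) (-(1 / 2) * (√s : ℂ)⁻¹ ^ 3) s := by
  have h0 : (√s : ℂ) ≠ 0 := by exact_mod_cast (Real.sqrt_pos.2 hs).ne'
  refine ((hasDerivAt_sqrtC hs).fun_inv h0).congr_deriv ?_
  field_simp

theorem hasDerivAt_expC (κ : ℂ) {s : ℝ} (hs : 0 < s) :
    HasDerivAt (fun s : ℝ => Complex.exp (Complex.I * κ * √s))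
      (Complex.exp (Complex.I * κ * √s) * (Complex.I * κ * (1 / 2 * (√s : ℂ)⁻¹))) s :=
  ((hasDerivAt_sqrtC hs).const_mul (Complex.I * κ)).cexp

theorem hasDerivAt_prof (κ : ℂ) {s : ℝ} (hs : 0 < s) :
    HasDerivAt (prof κ) (prof1 κ s) s := by
  refine ((hasDerivAt_expC κ hs).fun_mul (hasDerivAt_sqrtC_inv hs)).congr_deriv ?_
  simp only [prof1]; ring

theorem hasDerivAt_prof1 (κ : ℂ) {s : ℝ} (hs : 0 < s) :
    HasDerivAt (prof1 κ) (prof2 κ s) s := by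
  have h := hasDerivAt_sqrtC_inv hs
  have h2 := ((h.fun_pow 2).const_mul (Complex.I * κ / 2)).fun_sub ((h.fun_pow 3).const_mul (1 / 2))
  refine ((hasDerivAt_expC κ hs).fun_mul h2).congr_deriv ?_
  simp only [prof2]
  push_cast
  ring_nf
  simp only [Complex.I_sq]
  ring

/-- For a function `P(ρ²)` with `ρ² = s = d² + |x|²`, the Laplacian in `x ∈ ℝ³` is
`4 (s - d²) P''(s) + 6 P'(s)`; hence `(-Δ - κ²)(e^{iκρ}/ρ) = kern`. -/
theorem prof_radial (κ : ℂ) (d : ℝ) {s : ℝ} (hs : 0 < s) :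
    -(4 * (s - d ^ 2) * prof2 κ s + 6 * prof1 κ s) = κ ^ 2 * prof κ s + kern κ d s := by
  have h0 : (√s : ℂ) ≠ 0 := by exact_mod_cast (Real.sqrt_pos.2 hs).ne'
  have hs' : (s : ℂ) = (√s : ℂ) ^ 2 := by exact_mod_cast (Real.sq_sqrt hs.le).symm
  simp only [prof, prof1, prof2, kern]
  generalize Complex.exp (Complex.I * κ * √s) = e
  rw [hs']
  generalize (√s : ℂ) = r at h0
  field_simp
  ring

theorem continuousOn_sqrtC_inv : ContinuousOn (fun s : ℝ => (√s : ℂ)⁻¹) (Ioi 0) := by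
  intro s hs
  exact (hasDerivAt_sqrtC_inv hs).continuousAt.continuousWithinAt

theorem continuousOn_prof (κ : ℂ) : ContinuousOn (prof κ) (Ioi 0) := fun _ hs =>
  (hasDerivAt_prof κ hs).continuousAt.continuousWithinAt

theorem continuousOn_prof1 (κ : ℂ) : ContinuousOn (prof1 κ) (Ioi 0) := fun _ hs =>
  (hasDerivAt_prof1 κ hs).continuousAt.continuousWithinAt

theorem continuousOn_prof2 (κ : ℂ) : ContinuousOn (prof2 κ) (Ioi 0) := by
  have := continuousOn_sqrtC_inv
  unfold prof2
  fun_prop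

theorem continuousOn_kern (κ : ℂ) (d : ℝ) : ContinuousOn (kern κ d) (Ioi 0) := by
  have := continuousOn_sqrtC_inv
  unfold kern
  fun_prop

theorem norm_exp_le {κ : ℂ} (hκ : 0 ≤ κ.im) {r : ℝ} (hr : 0 ≤ r) :
    ‖Complex.exp (Complex.I * κ * r)‖ ≤ 1 := by
  rw [Complex.norm_exp, Real.exp_le_one_iff]
  simp
  positivity

/-- For `Im κ ≥ 0` the outgoing wave is dominated by the Newtonian kernel, uniformly in `κ`. -/
theorem norm_prof_le {κ : ℂ} (hκ : 0 ≤ κ.im) (s : ℝ) : ‖prof κ s‖ ≤ (√s)⁻¹ := by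
  rw [prof, norm_mul, norm_inv, Complex.norm_real, Real.norm_of_nonneg (Real.sqrt_nonneg _)]
  exact mul_le_of_le_one_left (by positivity) (norm_exp_le hκ (Real.sqrt_nonneg _))

theorem exists_sqrt_im_nonneg (z : ℂ) : ∃ κ : ℂ, κ ^ 2 = z ∧ 0 ≤ κ.im := by
  obtain ⟨κ, hκ⟩ := IsAlgClosed.exists_pow_nat_eq z (n := 2) (by norm_num)
  rcases le_total 0 κ.im with h | h
  · exact ⟨κ, hκ, h⟩
  · exact ⟨-κ, by simpa using hκ, by simpa using h⟩

/-! ### Testing the equation against a plane wave times an outgoing wave -/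

/-- Two integrations by parts in a fixed direction `w`; the test function `χ` need not decay. -/
theorem integral_second_deriv_mul {G : Type*} [NormedAddCommGroup G] [NormedSpace ℝ G]
    [MeasurableSpace G] [BorelSpace G] [FiniteDimensional ℝ G] (μ : Measure G) [μ.IsAddHaarMeasure]
    {v : G → ℂ} (hv : ContDiff ℝ (⊤ : ℕ∞) v) (hs : HasCompactSupport v) (w : G)
    {χ χ1 χ2 : G → ℂ} (hχ : Continuous χ) (hχ1 : Continuous χ1) (hχ2 : Continuous χ2)
    (h1 : ∀ q, HasLineDerivAt ℝ χ (χ1 q) q w) (h2 : ∀ q, HasLineDerivAt ℝ χ1 (χ2 q) q w) :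
    ∫ q, fderiv ℝ (fun q => fderiv ℝ v q w) q w * χ q ∂μ = ∫ q, v q * χ2 q ∂μ := by
  have hv1 : ContDiff ℝ (⊤ : ℕ∞) (fun q => fderiv ℝ v q w) :=
    (hv.fderiv_right (by simp)).clm_apply contDiff_const
  have hv2 : ContDiff ℝ (⊤ : ℕ∞) (fun q => fderiv ℝ (fun q => fderiv ℝ v q w) q w) :=
    (hv1.fderiv_right (by simp)).clm_apply contDiff_const
  have hs1 : HasCompactSupport (fun q => fderiv ℝ v q w) := hs.fderiv_apply ℝ w
  have hs2 : HasCompactSupport (fun q => fderiv ℝ (fun q => fderiv ℝ v q w) q w) :=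
    hs1.fderiv_apply ℝ w
  have int : ∀ {f g : G → ℂ}, HasCompactSupport f → Continuous f → Continuous g →
      Integrable (fun q => f q * g q) μ := by
    intro f g hf hfc hgc
    exact (hfc.mul hgc).integrable_of_hasCompactSupport hf.mul_right
  have ld : ∀ {f : G → ℂ}, ContDiff ℝ (⊤ : ℕ∞) f → ∀ q, HasLineDerivAt ℝ f (fderiv ℝ f q w) q w :=
    fun hf q => ((hf.differentiable (by simp)) q).hasFDerivAt.hasLineDerivAt w
  have a := integral_bilinear_hasLineDerivAt_right_eq_neg_left_of_integrable (μ := μ)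
    (B := ContinuousLinearMap.mul ℝ ℂ) (f := fun q => fderiv ℝ v q w)
    (f' := fun q => fderiv ℝ (fun q => fderiv ℝ v q w) q w) (g := χ) (g' := χ1) (v := w)
    (int hs2 hv2.continuous hχ) (int hs1 hv1.continuous hχ1) (int hs1 hv1.continuous hχ)
    (fun q _ => ld hv1 q) (fun q _ => h1 q)
  have b := integral_bilinear_hasLineDerivAt_right_eq_neg_left_of_integrable (μ := μ)
    (B := ContinuousLinearMap.mul ℝ ℂ) (f := v)
    (f' := fun q => fderiv ℝ v q w) (g := χ1) (g' := χ2) (v := w)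
    (int hs1 hv1.continuous hχ1) (int hs hv.continuous hχ2) (int hs hv.continuous hχ1)
    (fun q _ => ld hv q) (fun q _ => h2 q)
  simp only [ContinuousLinearMap.mul_apply'] at a b
  rw [b, a, neg_neg]

/-- Lebesgue measure on the product is a Haar measure. -/
instance instHaarProd {E F : Type*} [NormedAddCommGroup E] [InnerProductSpace ℝ E]
    [FiniteDimensional ℝ E] [MeasurableSpace E] [BorelSpace E]
    [NormedAddCommGroup F] [InnerProductSpace ℝ F]
    [FiniteDimensional ℝ F] [MeasurableSpace F] [BorelSpace F] :
    (volume : Measure (E × F)).IsAddHaarMeasure :=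
  Measure.prod.instIsAddHaarMeasure (volume : Measure E) (volume : Measure F)

theorem integral_neg_sums {G α β : Type*} [MeasurableSpace G] {μ : Measure G} [Fintype α] [Fintype β]
    {A : α → G → ℂ} {B : β → G → ℂ} {C : G → ℂ} (hA : ∀ j, Integrable (A j) μ)
    (hB : ∀ j, Integrable (B j) μ) (hC : Integrable C μ) :
    ∫ q, (-((∑ j, A j q) + ∑ i, B i q) - C q) ∂μ =
      -((∑ j, ∫ q, A j q ∂μ) + ∑ i, ∫ q, B i q ∂μ) - ∫ q, C q ∂μ := by
  have h1 : Integrable (fun q => ∑ j, A j q) μ := integrable_finsetSum _ fun j _ => hA j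
  have h2 : Integrable (fun q => ∑ j, B j q) μ := integrable_finsetSum _ fun j _ => hB j
  rw [integral_sub (by exact (h1.add h2).neg) hC, integral_neg, integral_add h1 h2,
    integral_finsetSum _ fun j _ => hA j, integral_finsetSum _ fun j _ => hB j]

/-- The Laplacian on `ℝ³ × ℝ^ι`, as the sum of second derivatives along coordinate vectors. -/
def lapG {ι : Type*} [Fintype ι] [DecidableEq ι]
    (v : E3 × EuclideanSpace ℝ ι → ℂ) (q : E3 × EuclideanSpace ℝ ι) : ℂ :=
  (∑ j : Fin 3, fderiv ℝ (fun q => fderiv ℝ v q (EuclideanSpace.single j 1, 0)) q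
    (EuclideanSpace.single j 1, 0)) +
  ∑ i : ι, fderiv ℝ (fun q => fderiv ℝ v q (0, EuclideanSpace.single i 1)) q
    (0, EuclideanSpace.single i 1)

/-- The Fourier character `e^{-2πi⟨y, η⟩}` on `ℝ^ι`, with Mathlib's normalisation. -/
def chr {ι : Type*} [Fintype ι] (η y : EuclideanSpace ℝ ι) : ℂ :=
  Complex.exp (((-2 * π * inner ℝ y η : ℝ) : ℂ) * Complex.I)

theorem continuous_chr {ι : Type*} [Fintype ι] (η : EuclideanSpace ℝ ι) : Continuous (chr η) := by
  unfold chr; fun_prop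

theorem norm_chr {ι : Type*} [Fintype ι] (η y : EuclideanSpace ℝ ι) : ‖chr η y‖ = 1 := by
  rw [chr, Complex.norm_exp_ofReal_mul_I]

theorem hasDerivAt_chr {ι : Type*} [Fintype ι] [DecidableEq ι]
    (η y : EuclideanSpace ℝ ι) (i : ι) :
    HasDerivAt (fun t : ℝ => chr η (y + t • EuclideanSpace.single i 1))
      (-2 * π * η i * Complex.I * chr η y) 0 := by
  have h : HasDerivAt (fun t : ℝ => -2 * π * inner ℝ (y + t • EuclideanSpace.single i (1:ℝ)) η)
      (-2 * π * η i) 0 := by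
    have e : ∀ t : ℝ, inner ℝ (y + t • EuclideanSpace.single i (1:ℝ)) η = inner ℝ y η + t * η i := by
      intro t
      rw [inner_add_left, inner_smul_left, EuclideanSpace.inner_single_left]; simp
    simp_rw [e]
    simpa using (((hasDerivAt_id (0:ℝ)).mul_const (η i)).const_add (inner ℝ y η)).const_mul (-2 * π)
  refine ((h.ofReal_comp).mul_const Complex.I).cexp.congr_deriv ?_
  rw [zero_smul, add_zero, chr]
  push_cast
  ring

theorem hasDerivAt_radial {P P' : ℝ → ℂ} (hP : ∀ s, 0 < s → HasDerivAt P (P' s) s)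
    {d : ℝ} (hd : 0 < d) (a x : E3) (j : Fin 3) :
    HasDerivAt (fun t : ℝ => P (d ^ 2 + ‖x + t • EuclideanSpace.single j 1 - a‖ ^ 2))
      (2 * (x - a) j * P' (d ^ 2 + ‖x - a‖ ^ 2)) 0 := by
  have e : ∀ t : ℝ, d ^ 2 + ‖x + t • EuclideanSpace.single j (1:ℝ) - a‖ ^ 2 =
      d ^ 2 + ‖x - a‖ ^ 2 + 2 * (x - a) j * t + t ^ 2 := by
    intro t
    have : x + t • EuclideanSpace.single j (1:ℝ) - a = (x - a) + t • EuclideanSpace.single j (1:ℝ) := by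
      abel
    rw [this, norm_add_sq_real, inner_smul_right, EuclideanSpace.inner_single_right, norm_smul]
    simp
    ring
  simp_rw [e]
  have h : HasDerivAt (fun t : ℝ => d ^ 2 + ‖x - a‖ ^ 2 + 2 * (x - a) j * t + t ^ 2)
      (2 * (x - a) j) 0 := by
    have := (((hasDerivAt_id' (0:ℝ)).const_mul (2 * (x - a) j)).const_add
      (d ^ 2 + ‖x - a‖ ^ 2)).fun_add ((hasDerivAt_id' (0:ℝ)).fun_pow 2)
    refine this.congr_deriv ?_
    simp
  have h2 := HasDerivAt.scomp (0:ℝ) (g₁ := P) (g₁' := P' (d ^ 2 + ‖x - a‖ ^ 2))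
    (by simpa using hP (d ^ 2 + ‖x - a‖ ^ 2) (by positivity)) h
  refine h2.congr_deriv ?_
  rw [Complex.real_smul]; push_cast; rfl

theorem continuous_radial {P : ℝ → ℂ} (hP : ContinuousOn P (Ioi 0)) {d : ℝ} (hd : 0 < d) (a : E3) :
    Continuous fun x : E3 => P (d ^ 2 + ‖x - a‖ ^ 2) :=
  hP.comp_continuous (by fun_prop) (fun x => by simp only [mem_Ioi]; positivity)

theorem integrable_mul_of_compact {ι : Type*} [Fintype ι] 
    {v χ : E3 × EuclideanSpace ℝ ι → ℂ} (hv : Continuous v)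
    (hs : HasCompactSupport v) (hχ : Continuous χ) : Integrable (fun q => v q * χ q) :=
  (hv.mul hχ).integrable_of_hasCompactSupport hs.mul_right

/-- The equation `-Δv - zv = g` tested against `e^{iκρ}/ρ · e^{-2πi⟨y,η⟩}` with
`ρ² = d² + |x-a|²`: since `κ² + 4π²|η|² = z`, only the error kernel of the radial factor
remains on the side of `v`. -/
theorem green {ι : Type*} [Fintype ι] [DecidableEq ι]
    {v : E3 × EuclideanSpace ℝ ι → ℂ} (hv : ContDiff ℝ (⊤ : ℕ∞) v)
    (hs : HasCompactSupport v) (z κ : ℂ) (η : EuclideanSpace ℝ ι)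
    (hκ : κ ^ 2 = z - 4 * π ^ 2 * ‖η‖ ^ 2) {d : ℝ} (hd : 0 < d) (a : E3) :
    ∫ q : E3 × EuclideanSpace ℝ ι,
        (-lapG v q - z * v q) * (prof κ (d ^ 2 + ‖q.1 - a‖ ^ 2) * chr η q.2) =
      ∫ q : E3 × EuclideanSpace ℝ ι,
        v q * (kern κ d (d ^ 2 + ‖q.1 - a‖ ^ 2) * chr η q.2) := by
  have hc := continuous_chr η
  have hp0 := continuous_radial (continuousOn_prof κ) hd a
  have hp1 := continuous_radial (continuousOn_prof1 κ) hd a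
  have hp2 := continuous_radial (continuousOn_prof2 κ) hd a
  have hk := continuous_radial (continuousOn_kern κ d) hd a
  have hX : ∀ j : Fin 3, ∫ q, fderiv ℝ (fun q => fderiv ℝ v q (EuclideanSpace.single j 1, 0)) q
      (EuclideanSpace.single j 1, 0) * (prof κ (d ^ 2 + ‖q.1 - a‖ ^ 2) * chr η q.2) =
      ∫ q : E3 × EuclideanSpace ℝ ι, v q * ((2 * prof1 κ (d ^ 2 + ‖q.1 - a‖ ^ 2) +
        4 * ((q.1 - a) j : ℂ) ^ 2 * prof2 κ (d ^ 2 + ‖q.1 - a‖ ^ 2)) * chr η q.2) := by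
    intro j
    apply integral_second_deriv_mul volume hv hs (EuclideanSpace.single j 1, 0)
      (χ := fun q => prof κ (d ^ 2 + ‖q.1 - a‖ ^ 2) * chr η q.2)
      (χ2 := fun q => (2 * prof1 κ (d ^ 2 + ‖q.1 - a‖ ^ 2) +
        4 * ((q.1 - a) j : ℂ) ^ 2 * prof2 κ (d ^ 2 + ‖q.1 - a‖ ^ 2)) * chr η q.2)
      (χ1 := fun q => 2 * (q.1 - a) j * prof1 κ (d ^ 2 + ‖q.1 - a‖ ^ 2) * chr η q.2)
    · exact (hp0.comp continuous_fst).mul (hc.comp continuous_snd)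
    · exact ((Continuous.mul (by fun_prop) (hp1.comp continuous_fst))).mul (hc.comp continuous_snd)
    · exact Continuous.mul (((hp1.comp continuous_fst).const_mul 2).add
        (Continuous.mul (by fun_prop) (hp2.comp continuous_fst))) (hc.comp continuous_snd)
    · rintro ⟨x, y⟩
      have := (hasDerivAt_radial (fun s hs => hasDerivAt_prof κ hs) hd a x j).mul_const (chr η y)
      simpa [HasLineDerivAt] using this
    · rintro ⟨x, y⟩
      have h1 := hasDerivAt_radial (fun s hs => hasDerivAt_prof1 κ hs) hd a x j
      have h2 : HasDerivAt (fun t : ℝ => 2 *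
          (((x + t • EuclideanSpace.single j (1:ℝ) - a : E3) j : ℝ) : ℂ)) 2 0 := by
        have : HasDerivAt (fun t : ℝ => (x + t • EuclideanSpace.single j (1:ℝ) - a : E3) j) 1 0 := by
          simpa using ((hasDerivAt_id (0:ℝ)).const_add (x j)).sub_const (a j)
        simpa using this.ofReal_comp.const_mul (2:ℂ)
      have h3 := (h2.fun_mul h1).mul_const (chr η y)
      unfold HasLineDerivAt
      simp only [Prod.smul_mk, Prod.mk_add_mk, smul_zero, add_zero]
      refine h3.congr_deriv ?_
      rw [zero_smul, add_zero]
      ring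
  have hY : ∀ i : ι, ∫ q, fderiv ℝ (fun q => fderiv ℝ v q (0, EuclideanSpace.single i 1)) q
      (0, EuclideanSpace.single i 1) * (prof κ (d ^ 2 + ‖q.1 - a‖ ^ 2) * chr η q.2) =
      ∫ q : E3 × EuclideanSpace ℝ ι, v q * (prof κ (d ^ 2 + ‖q.1 - a‖ ^ 2) *
        (-(4 * π ^ 2 * (η i : ℂ) ^ 2) * chr η q.2)) := by
    intro i
    apply integral_second_deriv_mul volume hv hs (0, EuclideanSpace.single i 1)
      (χ := fun q => prof κ (d ^ 2 + ‖q.1 - a‖ ^ 2) * chr η q.2)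
      (χ2 := fun q => prof κ (d ^ 2 + ‖q.1 - a‖ ^ 2) *
        (-(4 * π ^ 2 * (η i : ℂ) ^ 2) * chr η q.2))
      (χ1 := fun q => prof κ (d ^ 2 + ‖q.1 - a‖ ^ 2) * (-2 * π * η i * Complex.I * chr η q.2))
    · exact (hp0.comp continuous_fst).mul (hc.comp continuous_snd)
    · exact (hp0.comp continuous_fst).mul ((hc.comp continuous_snd).const_mul _)
    · exact (hp0.comp continuous_fst).mul ((hc.comp continuous_snd).const_mul _)
    · rintro ⟨x, y⟩
      have := (hasDerivAt_chr η y i).const_mul (prof κ (d ^ 2 + ‖x - a‖ ^ 2))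
      simpa [HasLineDerivAt] using this
    · rintro ⟨x, y⟩
      have := ((hasDerivAt_chr η y i).const_mul (-2 * π * η i * Complex.I)).const_mul
        (prof κ (d ^ 2 + ‖x - a‖ ^ 2))
      unfold HasLineDerivAt
      simp only [Prod.smul_mk, Prod.mk_add_mk, smul_zero, add_zero]
      refine this.congr_deriv ?_
      linear_combination (4 * π ^ 2 * (η i : ℂ) ^ 2 * prof κ (d ^ 2 + ‖x - a‖ ^ 2) *
          chr η y) * Complex.I_sq
  have hv2 : ∀ w, Continuous (fun q => fderiv ℝ (fun q => fderiv ℝ v q w) q w) ∧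
      HasCompactSupport (fun q => fderiv ℝ (fun q => fderiv ℝ v q w) q w) := by
    intro w
    have hv1 : ContDiff ℝ (⊤ : ℕ∞) (fun q => fderiv ℝ v q w) :=
      (hv.fderiv_right (by simp)).clm_apply contDiff_const
    exact ⟨((hv1.fderiv_right (m := (⊤ : ℕ∞)) (by simp)).clm_apply contDiff_const).continuous,
      (hs.fderiv_apply ℝ w).fderiv_apply ℝ w⟩
  have hχ : Continuous fun q : E3 × EuclideanSpace ℝ ι =>
      prof κ (d ^ 2 + ‖q.1 - a‖ ^ 2) * chr η q.2 :=
    (hp0.comp continuous_fst).mul (hc.comp continuous_snd)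
  have e1 : ∀ q, (-lapG v q - z * v q) * (prof κ (d ^ 2 + ‖q.1 - a‖ ^ 2) * chr η q.2) =
      -((∑ j : Fin 3, fderiv ℝ (fun q => fderiv ℝ v q (EuclideanSpace.single j 1, 0)) q
          (EuclideanSpace.single j 1, 0) * (prof κ (d ^ 2 + ‖q.1 - a‖ ^ 2) * chr η q.2)) +
        ∑ i : ι, fderiv ℝ (fun q => fderiv ℝ v q (0, EuclideanSpace.single i 1)) q
          (0, EuclideanSpace.single i 1) * (prof κ (d ^ 2 + ‖q.1 - a‖ ^ 2) * chr η q.2)) -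
      v q * (z * (prof κ (d ^ 2 + ‖q.1 - a‖ ^ 2) * chr η q.2)) := by
    intro q
    rw [← Finset.sum_mul, ← Finset.sum_mul, lapG]
    ring
  simp_rw [e1]
  rw [integral_neg_sums (fun j => integrable_mul_of_compact (hv2 _).1 (hv2 _).2 hχ)
    (fun j => integrable_mul_of_compact (hv2 _).1 (hv2 _).2 hχ)
    (integrable_mul_of_compact hv.continuous hs (hχ.const_mul z))]
  simp_rw [hX, hY]
  have hx2 : ∀ j : Fin 3, Continuous fun q : E3 × EuclideanSpace ℝ ι =>
      (2 * prof1 κ (d ^ 2 + ‖q.1 - a‖ ^ 2) +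
        4 * ((q.1 - a) j : ℂ) ^ 2 * prof2 κ (d ^ 2 + ‖q.1 - a‖ ^ 2)) * chr η q.2 := fun j =>
    Continuous.mul (((hp1.comp continuous_fst).const_mul 2).add
        (Continuous.mul (by fun_prop) (hp2.comp continuous_fst))) (hc.comp continuous_snd)
  have hy2 : ∀ i : ι, Continuous fun q : E3 × EuclideanSpace ℝ ι =>
      prof κ (d ^ 2 + ‖q.1 - a‖ ^ 2) * (-(4 * π ^ 2 * (η i : ℂ) ^ 2) * chr η q.2) := fun i =>
    (hp0.comp continuous_fst).mul ((hc.comp continuous_snd).const_mul _)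
  rw [← integral_neg_sums
    (fun j => integrable_mul_of_compact hv.continuous hs (hx2 j))
    (fun i => integrable_mul_of_compact hv.continuous hs (hy2 i))
    (integrable_mul_of_compact hv.continuous hs (hχ.const_mul z))]
  congr 1
  ext q
  have hη : ∑ i : ι, (η i : ℂ) ^ 2 = (‖η‖ : ℂ) ^ 2 := by
    have := EuclideanSpace.real_norm_sq_eq η
    exact_mod_cast this.symm
  have hx : ∑ j : Fin 3, ((q.1 - a) j : ℂ) ^ 2 = (‖q.1 - a‖ : ℂ) ^ 2 := by
    have := EuclideanSpace.real_norm_sq_eq (q.1 - a)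
    exact_mod_cast this.symm
  have s1 : ∑ j : Fin 3, v q * ((2 * prof1 κ (d ^ 2 + ‖q.1 - a‖ ^ 2) +
        4 * ((q.1 - a) j : ℂ) ^ 2 * prof2 κ (d ^ 2 + ‖q.1 - a‖ ^ 2)) * chr η q.2) =
      v q * ((6 * prof1 κ (d ^ 2 + ‖q.1 - a‖ ^ 2) +
        4 * (‖q.1 - a‖ : ℂ) ^ 2 * prof2 κ (d ^ 2 + ‖q.1 - a‖ ^ 2)) * chr η q.2) := by
    rw [← hx, Fin.sum_univ_three, Fin.sum_univ_three]; ring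
  have s2 : ∑ i : ι, v q * (prof κ (d ^ 2 + ‖q.1 - a‖ ^ 2) *
        (-(4 * π ^ 2 * (η i : ℂ) ^ 2) * chr η q.2)) =
      v q * (prof κ (d ^ 2 + ‖q.1 - a‖ ^ 2) * (-(4 * π ^ 2 * (‖η‖ : ℂ) ^ 2) * chr η q.2)) := by
    rw [← hη, ← Finset.mul_sum, ← Finset.mul_sum, ← Finset.sum_mul, Finset.sum_neg_distrib,
      ← Finset.mul_sum]
  have key := prof_radial κ d (s := d ^ 2 + ‖q.1 - a‖ ^ 2) (by positivity)
  rw [s1, s2]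
  push_cast at key
  linear_combination (v q * chr η q.2) * key +
    (v q * chr η q.2 * prof κ (d ^ 2 + ‖q.1 - a‖ ^ 2)) * hκ

/-! ### Reproducing point values as the regularisation vanishes -/

/-- Japanese bracket `(1 + |s|²)^{1/2}`. -/
def jb (s : E3) : ℝ := √(1 + ‖s‖ ^ 2)

theorem one_le_jb (s : E3) : 1 ≤ jb s := Real.one_le_sqrt.2 (by nlinarith [sq_nonneg ‖s‖])

theorem jb_sq (s : E3) : jb s ^ 2 = 1 + ‖s‖ ^ 2 := Real.sq_sqrt (by positivity)

theorem jb_le (s : E3) : jb s ≤ 1 + ‖s‖ :=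
  Real.sqrt_le_iff.2 ⟨by positivity, by nlinarith [norm_nonneg s]⟩

theorem continuous_jb : Continuous jb := by unfold jb; fun_prop

theorem continuous_jb_inv : Continuous fun s => (jb s)⁻¹ :=
  continuous_jb.inv₀ fun s => (by linarith [one_le_jb s] : (0:ℝ) < jb s).ne'

theorem integrable_jb : Integrable fun s : E3 => (jb s)⁻¹ ^ 4 := by
  have h := integrable_rpow_neg_one_add_norm_sq (E := E3) (μ := volume) (r := 4)
    (by simp; norm_num)
  refine h.congr (ae_of_all _ fun s => ?_)
  have h1 : (0:ℝ) < 1 + ‖s‖ ^ 2 := by positivity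
  have e : (-(4:ℝ) / 2) = -((2 : ℕ) : ℝ) := by norm_num
  simp only
  rw [e, Real.rpow_neg h1.le, Real.rpow_natCast, ← jb_sq]
  ring

/-- The total mass `∫ 3⟨s⟩⁻⁵ ds` (in fact `4π`) of the rescaled error kernel at `d = 0`. -/
def mass : ℝ := ∫ s : E3, 3 * (jb s)⁻¹ ^ 5

/-- Only the crude bound `≥ 1` matters; it already follows from the unit ball, where `⟨s⟩ ≤ 3/2`. -/
theorem one_le_mass : 1 ≤ mass := by
  have hint : Integrable fun s : E3 => 3 * (jb s)⁻¹ ^ 5 := by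
    refine (integrable_jb.const_mul 3).mono'
      ((continuous_jb_inv.pow 5).const_mul 3).aestronglyMeasurable (ae_of_all _ fun s => ?_)
    have h1 := one_le_jb s
    have h2 : (jb s)⁻¹ ≤ 1 := inv_le_one_of_one_le₀ h1
    have h3 : 0 ≤ (jb s)⁻¹ := by positivity
    rw [Real.norm_of_nonneg (by positivity)]
    have : (jb s)⁻¹ ^ 5 ≤ (jb s)⁻¹ ^ 4 := pow_le_pow_of_le_one h3 h2 (by norm_num)
    linarith
  have hvol : volume.real (Metric.ball (0 : E3) 1) = π * 4 / 3 := by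
    rw [Measure.real, EuclideanSpace.volume_ball_fin_three]
    simp only [ofReal_one, one_pow, one_mul]
    exact ENNReal.toReal_ofReal (by positivity)
  have hb : ∫ s in Metric.ball (0 : E3) 1, (96 / 243 : ℝ) ≤ mass := by
    calc ∫ s in Metric.ball (0 : E3) 1, (96 / 243 : ℝ)
        ≤ ∫ s in Metric.ball (0 : E3) 1, 3 * (jb s)⁻¹ ^ 5 := by
          refine setIntegral_mono_on (integrableOn_const (measure_ball_lt_top.ne))
            hint.integrableOn measurableSet_ball fun s hs => ?_
          have hs1 : ‖s‖ < 1 := by simpa using hs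
          have h1 : jb s ≤ 3 / 2 := Real.sqrt_le_iff.2 ⟨by norm_num, by nlinarith [norm_nonneg s]⟩
          have h2 : (2 / 3 : ℝ) ≤ (jb s)⁻¹ := by
            rw [le_inv_comm₀ (by norm_num) (by linarith [one_le_jb s])]
            linarith
          have : (2 / 3 : ℝ) ^ 5 ≤ (jb s)⁻¹ ^ 5 := pow_le_pow_left₀ (by norm_num) h2 5
          linarith
      _ ≤ mass := setIntegral_le_integral hint (ae_of_all _ fun s => by
          have := one_le_jb s; show (0:ℝ) ≤ 3 * (jb s)⁻¹ ^ 5; positivity)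
  rw [setIntegral_const, hvol, smul_eq_mul] at hb
  linarith [Real.pi_gt_three]

/-- The error kernel after the rescaling `x = a + d s`. -/
theorem kern_rescale (κ : ℂ) {d : ℝ} (hd : 0 < d) (s : E3) :
    (d : ℂ) ^ 3 * kern κ d (d ^ 2 + ‖d • s‖ ^ 2) =
      Complex.exp (Complex.I * κ * ((d * jb s : ℝ) : ℂ)) *
        (3 * (jb s : ℂ)⁻¹ ^ 5 - 3 * Complex.I * κ * d * (jb s : ℂ)⁻¹ ^ 4 -
          κ ^ 2 * d ^ 2 * (jb s : ℂ)⁻¹ ^ 3) := by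
  have hj : (0:ℝ) < jb s := by linarith [one_le_jb s]
  have e : √(d ^ 2 + ‖d • s‖ ^ 2) = d * jb s := by
    rw [norm_smul, mul_pow, Real.norm_of_nonneg hd.le, ← mul_one_add, Real.sqrt_mul (by positivity),
      Real.sqrt_sq hd.le, jb]
  have h1 : (d : ℂ) ≠ 0 := by exact_mod_cast hd.ne'
  have h2 : (jb s : ℂ) ≠ 0 := by exact_mod_cast hj.ne'
  rw [kern, e]
  push_cast
  field_simp

/-- Domination of the rescaled error kernel, uniform in `d ≤ 1`, on the region `d|s| ≤ D`. -/
theorem norm_kern_rescale {κ : ℂ} (hκ : 0 ≤ κ.im) {d : ℝ} (hd : 0 < d) (hd1 : d ≤ 1) {D : ℝ}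
    (hD : 0 ≤ D) {s : E3} (hs : d * ‖s‖ ≤ D) :
    ‖(d : ℂ) ^ 3 * kern κ d (d ^ 2 + ‖d • s‖ ^ 2)‖ ≤
      (3 + 3 * ‖κ‖ + ‖κ‖ ^ 2 * (1 + D)) * (jb s)⁻¹ ^ 4 := by
  have h1 := one_le_jb s
  have hj : (0:ℝ) < jb s := by linarith
  have hi : (jb s)⁻¹ ≤ 1 := inv_le_one_of_one_le₀ h1
  rw [kern_rescale κ hd, norm_mul]
  refine (mul_le_of_le_one_left (norm_nonneg _) (norm_exp_le hκ (by positivity))).trans ?_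
  refine (norm_sub_le _ _).trans ((add_le_add_left (norm_sub_le _ _) _).trans ?_)
  simp only [norm_mul, norm_pow, norm_inv, Complex.norm_real, Complex.norm_I, mul_one,
    Real.norm_of_nonneg hj.le, Real.norm_of_nonneg hd.le, Complex.norm_ofNat]
  have hk := norm_nonneg κ
  have a1 : 3 * (jb s)⁻¹ ^ 5 ≤ 3 * (jb s)⁻¹ ^ 4 := by
    have := pow_le_pow_of_le_one (inv_nonneg.2 hj.le) hi (show 4 ≤ 5 by norm_num)
    linarith
  have a2 : 3 * ‖κ‖ * d * (jb s)⁻¹ ^ 4 ≤ 3 * ‖κ‖ * (jb s)⁻¹ ^ 4 := by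
    have : 0 ≤ 3 * ‖κ‖ * (jb s)⁻¹ ^ 4 := by positivity
    nlinarith
  have a3 : ‖κ‖ ^ 2 * d ^ 2 * (jb s)⁻¹ ^ 3 ≤ ‖κ‖ ^ 2 * (1 + D) * (jb s)⁻¹ ^ 4 := by
    have b : d ^ 2 * jb s ≤ 1 + D := by
      have b1 : d * jb s ≤ 1 + D := by nlinarith [jb_le s]
      have b2 : 0 ≤ d * jb s := by positivity
      nlinarith
    have e : ‖κ‖ ^ 2 * d ^ 2 * (jb s)⁻¹ ^ 3 = ‖κ‖ ^ 2 * (d ^ 2 * jb s) * (jb s)⁻¹ ^ 4 := by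
      field_simp
    rw [e]
    gcongr
  linarith

/-- The regularised fundamental solution reproduces point values as `d → 0`. -/
theorem tendsto_kern {κ : ℂ} (hκ : 0 ≤ κ.im) {U : E3 → ℂ} (hU : Continuous U)
    (hUs : HasCompactSupport U) (a : E3) :
    Tendsto (fun d : ℝ => ∫ x, U x * kern κ d (d ^ 2 + ‖x - a‖ ^ 2)) (𝓝[>] 0)
      (𝓝 (mass * U a)) := by
  obtain ⟨M, hM⟩ := hU.bounded_above_of_compact_support hUs
  obtain ⟨D, hD0, hD⟩ : ∃ D : ℝ, 0 ≤ D ∧ ∀ x, U x ≠ 0 → ‖x - a‖ ≤ D := by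
    obtain ⟨D, hD⟩ := hUs.isBounded.subset_closedBall a
    refine ⟨max D 0, le_max_right _ _, fun x hx => le_max_of_le_left ?_⟩
    have := hD (subset_tsupport _ hx)
    rwa [Metric.mem_closedBall, dist_eq_norm] at this
  have hM0 : 0 ≤ M := (norm_nonneg _).trans (hM 0)
  have key : ∀ d : ℝ, 0 < d → ∫ x, U x * kern κ d (d ^ 2 + ‖x - a‖ ^ 2) =
      ∫ s : E3, U (a + d • s) * ((d : ℂ) ^ 3 * kern κ d (d ^ 2 + ‖d • s‖ ^ 2)) := by
    intro d hd
    have h1 := integral_add_left_eq_self (μ := (volume : Measure E3))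
      (fun x => U x * kern κ d (d ^ 2 + ‖x - a‖ ^ 2)) a
    have h2 := Measure.integral_comp_smul (volume : Measure E3)
      (fun x => U (a + x) * kern κ d (d ^ 2 + ‖a + x - a‖ ^ 2)) d
    rw [← h1]
    simp only [add_sub_cancel_left] at h2 ⊢
    have h3 : ∀ s : E3, U (a + d • s) * ((d : ℂ) ^ 3 * kern κ d (d ^ 2 + ‖d • s‖ ^ 2)) =
        (d : ℂ) ^ 3 * (U (a + d • s) * kern κ d (d ^ 2 + ‖d • s‖ ^ 2)) := fun s => by ring
    simp_rw [h3]
    rw [integral_const_mul, h2, abs_of_pos (by positivity), finrank_euclideanSpace, Fintype.card_fin,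
      Complex.real_smul]
    have : (d : ℂ) ≠ 0 := by exact_mod_cast hd.ne'
    push_cast
    field_simp
  have hlim : (mass * U a : ℂ) = ∫ s : E3, U a * (3 * (jb s : ℂ)⁻¹ ^ 5) := by
    rw [integral_const_mul, mass, ← integral_complex_ofReal, mul_comm]
    push_cast
    rfl
  -- Dominated convergence: on the support of `U` one has `d|s| ≤ D`, which turns the factor
  -- `d²⟨s⟩⁻³` into an integrable multiple of `⟨s⟩⁻⁴`.
  rw [hlim]
  have hev : ∀ᶠ d : ℝ in 𝓝[>] 0, 0 < d ∧ d ≤ 1 :=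
    Ioc_mem_nhdsGT one_pos
  refine Tendsto.congr' (f₁ := fun d : ℝ =>
    ∫ s : E3, U (a + d • s) * ((d : ℂ) ^ 3 * kern κ d (d ^ 2 + ‖d • s‖ ^ 2)))
    (hev.mono fun d hd => (key d hd.1).symm) ?_
  refine tendsto_integral_filter_of_dominated_convergence
    (fun s => M * ((3 + 3 * ‖κ‖ + ‖κ‖ ^ 2 * (1 + D)) * (jb s)⁻¹ ^ 4)) ?_ ?_ ?_ ?_
  · refine hev.mono fun d hd => Continuous.aestronglyMeasurable ?_
    have h1 : Continuous fun s : E3 => kern κ d (d ^ 2 + ‖d • s‖ ^ 2) :=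
      (continuousOn_kern κ d).comp_continuous (by fun_prop) fun s => by
        have := hd.1; simp only [mem_Ioi]; positivity
    fun_prop
  · refine hev.mono fun d hd => ae_of_all _ fun s => ?_
    by_cases h0 : U (a + d • s) = 0
    · rw [h0, zero_mul, norm_zero]; positivity
    · have := hD _ h0
      rw [add_sub_cancel_left, norm_smul, Real.norm_of_nonneg hd.1.le] at this
      rw [norm_mul]
      exact mul_le_mul (hM _) (norm_kern_rescale hκ hd.1 hd.2 hD0 this) (norm_nonneg _) hM0
  · exact (integrable_jb.const_mul _).const_mul _
  · refine ae_of_all _ fun s => ?_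
    have hc : Continuous fun d : ℝ => U (a + d • s) *
        (Complex.exp (Complex.I * κ * ((d * jb s : ℝ) : ℂ)) *
        (3 * (jb s : ℂ)⁻¹ ^ 5 - 3 * Complex.I * κ * d * (jb s : ℂ)⁻¹ ^ 4 -
          κ ^ 2 * d ^ 2 * (jb s : ℂ)⁻¹ ^ 3)) := by fun_prop
    have := (hc.tendsto 0).mono_left (nhdsWithin_le_nhds (s := Ioi 0))
    simp only [zero_smul, add_zero, zero_mul, Complex.ofReal_zero, mul_zero, Complex.exp_zero,
      sub_zero, one_mul, ne_eq, OfNat.ofNat_ne_zero, not_false_eq_true, zero_pow] at this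
    refine this.congr' (hev.mono fun d hd => ?_)
    simp only
    rw [kern_rescale κ hd.1]

/-! ### The partial Fourier transform -/

/-- The partial Fourier transform `∫ v(x, y) e^{-2πi⟨y, η⟩} dy` in the variable `y`. -/
def pF {ι : Type*} [Fintype ι] (v : E3 × EuclideanSpace ℝ ι → ℂ) (x : E3)
    (η : EuclideanSpace ℝ ι) : ℂ :=
  ∫ y, v (x, y) * chr η y

theorem continuous_pF {ι : Type*} [Fintype ι] {v : E3 × EuclideanSpace ℝ ι → ℂ} (hv : Continuous v)
    (hs : HasCompactSupport v) : Continuous fun p : E3 × EuclideanSpace ℝ ι => pF v p.1 p.2 := by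
  rw [← continuousOn_univ]
  refine continuousOn_integral_of_compact_support (k := Prod.snd '' tsupport v)
    (f := fun (p : E3 × EuclideanSpace ℝ ι) y => v (p.1, y) * chr p.2 y)
    (hs.image continuous_snd) ?_ ?_
  · refine Continuous.continuousOn ?_
    unfold chr Function.uncurry
    fun_prop
  · intro p y _ hy
    have : v (p.1, y) = 0 := by
      by_contra h
      exact hy ⟨(p.1, y), subset_tsupport _ h, rfl⟩
    simp [this]

theorem continuous_pF_left {ι : Type*} [Fintype ι] {v : E3 × EuclideanSpace ℝ ι → ℂ}
    (hv : Continuous v) (hs : HasCompactSupport v) (η : EuclideanSpace ℝ ι) :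
    Continuous fun x => pF v x η :=
  (continuous_pF hv hs).comp (Continuous.prodMk_left η)

theorem compact_pF {ι : Type*} [Fintype ι] {v : E3 × EuclideanSpace ℝ ι → ℂ}
    (hs : HasCompactSupport v) (η : EuclideanSpace ℝ ι) :
    HasCompactSupport fun x => pF v x η := by
  refine HasCompactSupport.intro (hs.image continuous_fst) fun x hx => ?_
  have : ∀ y, v (x, y) = 0 := fun y => by
    by_contra h
    exact hx ⟨(x, y), subset_tsupport _ h, rfl⟩
  simp [pF, this]

theorem integral_pF {ι : Type*} [Fintype ι] {v : E3 × EuclideanSpace ℝ ι → ℂ} (hv : Continuous v)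
    (hs : HasCompactSupport v) {P : E3 → ℂ} (hP : Continuous P) (η : EuclideanSpace ℝ ι) :
    ∫ q : E3 × EuclideanSpace ℝ ι, v q * (P q.1 * chr η q.2) = ∫ x, pF v x η * P x := by
  have hi : Integrable fun q : E3 × EuclideanSpace ℝ ι => v q * (P q.1 * chr η q.2) :=
    integrable_mul_of_compact hv hs
      ((hP.comp continuous_fst).mul ((continuous_chr η).comp continuous_snd))
  rw [Measure.volume_eq_prod] at hi ⊢
  rw [integral_prod _ hi]
  congr 1
  ext x
  rw [pF, ← integral_mul_const]
  congr 1
  ext y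
  ring

theorem smooth_lapG {ι : Type*} [Fintype ι] [DecidableEq ι]
    {v : E3 × EuclideanSpace ℝ ι → ℂ} (hv : ContDiff ℝ (⊤ : ℕ∞) v) :
    ContDiff ℝ (⊤ : ℕ∞) (lapG v) := by
  have h : ∀ w, ContDiff ℝ (⊤ : ℕ∞) fun q => fderiv ℝ (fun q => fderiv ℝ v q w) q w := by
    intro w
    have hv1 : ContDiff ℝ (⊤ : ℕ∞) (fun q => fderiv ℝ v q w) :=
      (hv.fderiv_right (by simp)).clm_apply contDiff_const
    exact (hv1.fderiv_right (m := (⊤ : ℕ∞)) (by simp)).clm_apply contDiff_const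
  unfold lapG
  exact (ContDiff.sum fun _ _ => h _).add (ContDiff.sum fun _ _ => h _)

theorem compact_lapG {ι : Type*} [Fintype ι] [DecidableEq ι]
    {v : E3 × EuclideanSpace ℝ ι → ℂ} (hs : HasCompactSupport v) :
    HasCompactSupport (lapG v) := by
  refine HasCompactSupport.intro (K := tsupport v) hs fun q hq => ?_
  have h : ∀ w, fderiv ℝ (fun q => fderiv ℝ v q w) q w = 0 := by
    intro w
    by_contra h
    apply hq
    have h1 : q ∈ tsupport (fun q => fderiv ℝ (fun q => fderiv ℝ v q w) q w) :=
      subset_tsupport _ h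
    exact tsupport_fderiv_apply_subset ℝ w (tsupport_fderiv_apply_subset ℝ w h1)
  simp [lapG, h]

/-! ### Pointwise bounds for the partial Fourier transform -/

/-- Cauchy–Schwarz against the Newtonian kernel, uniformly in the regularisation `d`. -/
theorem prof_cauchy_schwarz {κ : ℂ} (hκ0 : 0 ≤ κ.im) {G : E3 → ℂ} (cG : Continuous G)
    {S : ℝ} (hS : 0 < S) (a : E3) (d : ℝ) :
    ‖∫ x, G x * prof κ (d ^ 2 + ‖x - a‖ ^ 2)‖ₑ ≤
      (∫⁻ x, ENNReal.ofReal (S + ‖x‖ ^ 2 / S) * ‖G x‖ₑ ^ 2) ^ (1 / 2 : ℝ) *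
        ENNReal.ofReal (4 * π ^ 2) ^ (1 / 2 : ℝ) := by
  have hna : ∀ᵐ x : E3, x ≠ a := by simp [ae_iff]
  have hw : ∀ x : E3, 0 < S + ‖x‖ ^ 2 / S := fun x => by positivity
  have step1 : ‖∫ x, G x * prof κ (d ^ 2 + ‖x - a‖ ^ 2)‖ₑ ≤
      ∫⁻ x, ((fun x => ENNReal.ofReal √(S + ‖x‖ ^ 2 / S) * ‖G x‖ₑ) *
            fun x => ENNReal.ofReal (‖x - a‖⁻¹ * (√(S + ‖x‖ ^ 2 / S))⁻¹)) x := by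
    refine (enorm_integral_le_lintegral_enorm _).trans ?_
    refine lintegral_mono_ae (hna.mono fun x hx => ?_)
    have hx0 : 0 < ‖x - a‖ := norm_pos_iff.2 (sub_ne_zero.2 hx)
    have h1 : ‖prof κ (d ^ 2 + ‖x - a‖ ^ 2)‖ₑ ≤ ENNReal.ofReal ‖x - a‖⁻¹ := by
      rw [← ofReal_norm]
      refine ENNReal.ofReal_le_ofReal ((norm_prof_le hκ0 _).trans ?_)
      refine inv_anti₀ hx0 (Real.le_sqrt_of_sq_le ?_)
      nlinarith
    have hq : 0 < √(S + ‖x‖ ^ 2 / S) := Real.sqrt_pos.2 (hw x)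
    rw [Pi.mul_apply, enorm_mul, mul_right_comm, ← ENNReal.ofReal_mul hq.le,
      mul_comm (ENNReal.ofReal _)]
    refine mul_le_mul_right (h1.trans (le_of_eq ?_)) _
    congr 1
    field_simp
  refine step1.trans ?_
  refine (ENNReal.lintegral_mul_le_Lp_mul_Lq volume Real.HolderConjugate.two_two
    ?_ ?_).trans ?_
  · exact AEMeasurable.mul (Measurable.aemeasurable (by fun_prop)) cG.enorm.aemeasurable
  · exact Measurable.aemeasurable (by fun_prop)
  · have e1 : ∀ x : E3, (ENNReal.ofReal √(S + ‖x‖ ^ 2 / S) * ‖G x‖ₑ) ^ (2:ℝ) =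
        ENNReal.ofReal (S + ‖x‖ ^ 2 / S) * ‖G x‖ₑ ^ 2 := by
      intro x
      rw [ENNReal.rpow_two, mul_pow, ← ENNReal.ofReal_pow (Real.sqrt_nonneg _),
        Real.sq_sqrt (hw x).le]
    have e2 : ∀ x : E3, ENNReal.ofReal (‖x - a‖⁻¹ * (√(S + ‖x‖ ^ 2 / S))⁻¹) ^ (2:ℝ) =
        ENNReal.ofReal ((‖x - a‖ ^ 2)⁻¹ * (S + ‖x‖ ^ 2 / S)⁻¹) := by
      intro x
      rw [ENNReal.rpow_two, ← ENNReal.ofReal_pow (by positivity), mul_pow, inv_pow, inv_pow,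
        Real.sq_sqrt (hw x).le]
    simp_rw [e1, e2]
    gcongr
    exact lintegral_two_center S hS a

theorem smooth_opG {ι : Type*} [Fintype ι] [DecidableEq ι]
    {v : E3 × EuclideanSpace ℝ ι → ℂ} (hv : ContDiff ℝ (⊤ : ℕ∞) v) (z : ℂ) :
    ContDiff ℝ (⊤ : ℕ∞) fun q => -lapG v q - z * v q :=
  (smooth_lapG hv).neg.sub (contDiff_const.mul hv)

theorem compact_opG {ι : Type*} [Fintype ι] [DecidableEq ι]
    {v : E3 × EuclideanSpace ℝ ι → ℂ} (hs : HasCompactSupport v) (z : ℂ) :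
    HasCompactSupport fun q => -lapG v q - z * v q := by
  have h1 : HasCompactSupport fun q => z * v q := hs.mul_left
  have h2 : HasCompactSupport fun q => -lapG v q :=
    (compact_lapG hs).comp_left (g := Neg.neg) neg_zero
  exact h2.sub h1

/-- Pointwise bound for the partial Fourier transform of `v` by that of `-Δv - zv`, uniform in
`z`, `a` and `η`: the wave number is the root `κ` of `z - 4π²|η|²` with `Im κ ≥ 0`, and `d → 0`
in the tested equation. -/
theorem pF_bound {ι : Type*} [Fintype ι] [DecidableEq ι]
    {v : E3 × EuclideanSpace ℝ ι → ℂ} (hv : ContDiff ℝ (⊤ : ℕ∞) v)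
    (hs : HasCompactSupport v) (z : ℂ) {S : ℝ} (hS : 0 < S) (a : E3) (η : EuclideanSpace ℝ ι) :
    ‖pF v a η‖ₑ ^ 2 ≤ ENNReal.ofReal (4 * π ^ 2) *
      ∫⁻ x, ENNReal.ofReal (S + ‖x‖ ^ 2 / S) * ‖pF (fun q => -lapG v q - z * v q) x η‖ₑ ^ 2 := by
  have hgc := (smooth_opG hv z).continuous
  have hgs := compact_opG hs z
  obtain ⟨κ, hκ, hκ0⟩ := exists_sqrt_im_nonneg (z - 4 * π ^ 2 * ‖η‖ ^ 2)
  have cU : Continuous fun x => pF v x η :=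
    continuous_pF_left hv.continuous hs η
  have cG : Continuous fun x => pF (fun q => -lapG v q - z * v q) x η :=
    continuous_pF_left hgc hgs η
  have ident : ∀ d : ℝ, 0 < d → ∫ x, pF v x η * kern κ d (d ^ 2 + ‖x - a‖ ^ 2) =
      ∫ x, pF (fun q => -lapG v q - z * v q) x η * prof κ (d ^ 2 + ‖x - a‖ ^ 2) := by
    intro d hd
    rw [← integral_pF hv.continuous hs (continuous_radial (continuousOn_kern κ d) hd a),
      ← integral_pF hgc hgs (continuous_radial (continuousOn_prof κ) hd a)]
    exact (green hv hs z κ η hκ hd a).symm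
  generalize pF (fun q => -lapG v q - z * v q) = F at *
  have hlim := (tendsto_kern hκ0 cU (compact_pF hs η) a).enorm
  have hfin := le_of_tendsto hlim
    ((eventually_mem_nhdsWithin (a := (0:ℝ)) (s := Ioi 0)).mono fun d hd =>
      (congrArg _ (ident d hd)).trans_le (prof_cauchy_schwarz hκ0 cG hS a d))
  have h1 : ‖pF v a η‖ₑ ≤ ‖(mass : ℂ) * pF v a η‖ₑ := by
    rw [enorm_mul]
    refine le_mul_of_one_le_left (zero_le) ?_
    rw [← ofReal_norm, Complex.norm_real, Real.norm_of_nonneg (by linarith [one_le_mass])]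
    simpa using one_le_mass
  have h2 := h1.trans hfin
  generalize ∫⁻ x, ENNReal.ofReal (S + ‖x‖ ^ 2 / S) * ‖F x η‖ₑ ^ 2 = A at *
  calc ‖pF v a η‖ₑ ^ 2 ≤ (A ^ (1 / 2 : ℝ) * ENNReal.ofReal (4 * π ^ 2) ^ (1 / 2 : ℝ)) ^ 2 :=
        pow_le_pow_left₀ (zero_le) h2 2
    _ = ENNReal.ofReal (4 * π ^ 2) * A := by
        rw [mul_pow, ← ENNReal.rpow_two, ← ENNReal.rpow_two, ← ENNReal.rpow_mul, ← ENNReal.rpow_mul,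
          show (1 / 2 : ℝ) * 2 = 1 by norm_num, ENNReal.rpow_one, ENNReal.rpow_one, mul_comm]

/-! ### The weighted estimate on `ℝ³ × ℝ^ι` -/

/-- Plancherel's theorem in `y` for the slice of `v` at `x`. -/
theorem plancherel {ι : Type*} [Fintype ι] {v : E3 × EuclideanSpace ℝ ι → ℂ}
    (hv : ContDiff ℝ (⊤ : ℕ∞) v) (hs : HasCompactSupport v) (x : E3) :
    ∫⁻ η, ‖pF v x η‖ₑ ^ 2 = ∫⁻ y, ‖v (x, y)‖ₑ ^ 2 := by
  have hg : ContDiff ℝ (⊤ : ℕ∞) fun y => v (x, y) := hv.comp (contDiff_prodMk_right x)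
  have hgs : HasCompactSupport fun y => v (x, y) := by
    refine HasCompactSupport.intro (hs.image continuous_snd) fun y hy => ?_
    by_contra h
    exact hy ⟨(x, y), subset_tsupport _ h, rfl⟩
  set f : SchwartzMap (EuclideanSpace ℝ ι) ℂ := hgs.toSchwartzMap hg with hf
  have hfv : ∀ y, f y = v (x, y) := fun y => rfl
  have hF : ∀ η, (FourierTransform.fourier f) η = pF v x η := by
    intro η
    rw [SchwartzMap.fourier_coe, Real.fourier_eq', pF]
    congr 1
    ext y
    rw [smul_eq_mul, mul_comm, hfv, chr]
  have conv : ∀ h : SchwartzMap (EuclideanSpace ℝ ι) ℂ,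
      ∫⁻ y, ‖h y‖ₑ ^ 2 = ENNReal.ofReal (∫ y, ‖h y‖ ^ 2) := by
    intro h
    have hi : Integrable fun y => ‖h y‖ ^ 2 := by
      simpa using (h.memLp 2).integrable_norm_pow (by norm_num)
    rw [ofReal_integral_eq_lintegral_ofReal hi (ae_of_all _ fun y => by positivity)]
    refine lintegral_congr fun y => ?_
    rw [ENNReal.ofReal_pow (norm_nonneg _), ofReal_norm]
  simp_rw [← hF, ← hfv]
  rw [conv, conv, SchwartzMap.integral_norm_sq_fourier]

/-- The `L²_y` norm of each slice of `v` is controlled by the weighted norm of `-Δv - zv`. -/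
theorem slice_bound {ι : Type*} [Fintype ι] [DecidableEq ι]
    {v : E3 × EuclideanSpace ℝ ι → ℂ} (hv : ContDiff ℝ (⊤ : ℕ∞) v)
    (hs : HasCompactSupport v) (z : ℂ) {S : ℝ} (hS : 0 < S) (a : E3) :
    ∫⁻ y, ‖v (a, y)‖ₑ ^ 2 ≤ ENNReal.ofReal (4 * π ^ 2) *
      ∫⁻ q : E3 × EuclideanSpace ℝ ι,
        ENNReal.ofReal (S + ‖q.1‖ ^ 2 / S) * ‖-lapG v q - z * v q‖ₑ ^ 2 := by
  have hg := smooth_opG hv z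
  have hgs := compact_opG hs z
  have hb := pF_bound hv hs z hS a
  show _ ≤ _ * ∫⁻ q : E3 × EuclideanSpace ℝ ι,
        ENNReal.ofReal (S + ‖q.1‖ ^ 2 / S) * ‖(fun q => -lapG v q - z * v q) q‖ₑ ^ 2
  generalize (fun q => -lapG v q - z * v q) = g at *
  have hpF : Measurable fun p : E3 × EuclideanSpace ℝ ι => pF g p.1 p.2 :=
    (continuous_pF hg.continuous hgs).measurable
  have hgm : Measurable g := hg.continuous.measurable
  have hw : Measurable fun x : E3 => ENNReal.ofReal (S + ‖x‖ ^ 2 / S) := by fun_prop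
  rw [← plancherel hv hs a, Measure.volume_eq_prod]
  calc ∫⁻ η, ‖pF v a η‖ₑ ^ 2
      ≤ ∫⁻ η, ENNReal.ofReal (4 * π ^ 2) *
          ∫⁻ x, ENNReal.ofReal (S + ‖x‖ ^ 2 / S) * ‖pF g x η‖ₑ ^ 2 := lintegral_mono hb
    _ = ENNReal.ofReal (4 * π ^ 2) * ∫⁻ η, ∫⁻ x,
          ENNReal.ofReal (S + ‖x‖ ^ 2 / S) * ‖pF g x η‖ₑ ^ 2 :=
        lintegral_const_mul' _ _ ENNReal.ofReal_ne_top
    _ = ENNReal.ofReal (4 * π ^ 2) * ∫⁻ x, ∫⁻ η,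
          ENNReal.ofReal (S + ‖x‖ ^ 2 / S) * ‖pF g x η‖ₑ ^ 2 := by
        rw [lintegral_lintegral_swap]
        refine Measurable.aemeasurable ?_
        exact (hw.comp measurable_snd).mul ((hpF.comp measurable_swap).enorm.pow_const 2)
    _ = ENNReal.ofReal (4 * π ^ 2) * ∫⁻ x, ∫⁻ y,
          ENNReal.ofReal (S + ‖x‖ ^ 2 / S) * ‖g (x, y)‖ₑ ^ 2 := by
        congr 1
        refine lintegral_congr fun x => ?_
        rw [lintegral_const_mul' _ _ ENNReal.ofReal_ne_top, plancherel hg hgs,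
          lintegral_const_mul' _ _ ENNReal.ofReal_ne_top]
    _ = _ := by
        rw [lintegral_prod]
        exact ((hw.comp measurable_fst).mul (hgm.enorm.pow_const 2)).aemeasurable

/-- The weighted resolvent estimate on `ℝ³ × ℝ^ι`. -/
theorem resolvent_three {ι : Type*} [Fintype ι] [DecidableEq ι]
    {v : E3 × EuclideanSpace ℝ ι → ℂ} (hv : ContDiff ℝ (⊤ : ℕ∞) v)
    (hs : HasCompactSupport v) (z : ℂ) {R S : ℝ} (hR : 0 < R) (hS : 0 < S) :
    ∫⁻ q : E3 × EuclideanSpace ℝ ι, ENNReal.ofReal ((R + ‖q.1‖ ^ 2 / R)⁻¹ ^ 3) * ‖v q‖ₑ ^ 2 ≤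
      ENNReal.ofReal (8 * π ^ 4) * ∫⁻ q : E3 × EuclideanSpace ℝ ι,
        ENNReal.ofReal (S + ‖q.1‖ ^ 2 / S) * ‖-lapG v q - z * v q‖ₑ ^ 2 := by
  have hb := slice_bound hv hs z hS
  generalize ∫⁻ q : E3 × EuclideanSpace ℝ ι,
        ENNReal.ofReal (S + ‖q.1‖ ^ 2 / S) * ‖-lapG v q - z * v q‖ₑ ^ 2 = N at *
  have hw : Measurable fun x : E3 => ENNReal.ofReal ((R + ‖x‖ ^ 2 / R)⁻¹ ^ 3) := by fun_prop
  have hm : Measurable fun q : E3 × EuclideanSpace ℝ ι =>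
      ENNReal.ofReal ((R + ‖q.1‖ ^ 2 / R)⁻¹ ^ 3) * ‖v q‖ₑ ^ 2 :=
    (hw.comp measurable_fst).mul (hv.continuous.measurable.enorm.pow_const 2)
  rw [Measure.volume_eq_prod, lintegral_prod _ hm.aemeasurable]
  calc ∫⁻ x, ∫⁻ y, ENNReal.ofReal ((R + ‖x‖ ^ 2 / R)⁻¹ ^ 3) * ‖v (x, y)‖ₑ ^ 2
      ≤ ∫⁻ x : E3, ENNReal.ofReal ((R + ‖x‖ ^ 2 / R)⁻¹ ^ 3) *
          (ENNReal.ofReal (4 * π ^ 2) * N) := by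
        refine lintegral_mono fun x => ?_
        rw [lintegral_const_mul' _ _ ENNReal.ofReal_ne_top]
        exact mul_le_mul_right (hb x) _
    _ = (∫⁻ x : E3, ENNReal.ofReal ((R + ‖x‖ ^ 2 / R)⁻¹ ^ 3)) *
          (ENNReal.ofReal (4 * π ^ 2) * N) := lintegral_mul_const _ hw
    _ ≤ ENNReal.ofReal (2 * π ^ 2) * (ENNReal.ofReal (4 * π ^ 2) * N) :=
        mul_le_mul_left (lintegral_weight_cube R hR) _
    _ = ENNReal.ofReal (8 * π ^ 4) * N := by
        rw [← mul_assoc, ← ENNReal.ofReal_mul (by positivity)]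
        ring_nf

/-! ### Reduction of `n` to three -/

/-- The linear isomorphism `ℝ³ × ℝ^{k+m} ≃ ℝ^{3+k} × ℝ^m` regrouping the coordinates: the last
`k` of the `x` variables are moved to the transversal factor. -/
def regroup (k m : ℕ) : (E3 × EuclideanSpace ℝ (Fin k ⊕ Fin m)) ≃L[ℝ] Pt (3 + k) m :=
  LinearEquiv.toContinuousLinearEquiv
    { toFun := fun q => (WithLp.toLp 2 (Fin.append q.1 fun i => q.2 (Sum.inl i)),
        WithLp.toLp 2 fun i => q.2 (Sum.inr i))
      invFun := fun p => (WithLp.toLp 2 fun i => p.1 (Fin.castAdd k i),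
        WithLp.toLp 2 (Sum.elim (fun i => p.1 (Fin.natAdd 3 i)) p.2))
      map_add' := by
        intro p q
        refine Prod.ext ?_ ?_ <;> ext i
        · refine Fin.addCases (fun i => ?_) (fun i => ?_) i <;> simp
        · simp
      map_smul' := by
        intro c q
        refine Prod.ext ?_ ?_ <;> ext i
        · refine Fin.addCases (fun i => ?_) (fun i => ?_) i <;> simp
        · simp
      left_inv := by
        intro q
        refine Prod.ext ?_ ?_ <;> ext i
        · simp
        · rcases i with i | i <;> simp
      right_inv := by
        intro p
        refine Prod.ext ?_ ?_ <;> ext i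
        · refine Fin.addCases (fun i => ?_) (fun i => ?_) i <;> simp
        · simp }

theorem regroup_apply (k m : ℕ) (q : E3 × EuclideanSpace ℝ (Fin k ⊕ Fin m)) :
    regroup k m q = (WithLp.toLp 2 (Fin.append q.1 fun i => q.2 (Sum.inl i)),
        WithLp.toLp 2 fun i => q.2 (Sum.inr i)) := rfl

theorem regroup_x (k m : ℕ) (j : Fin 3) :
    regroup k m (EuclideanSpace.single j 1, 0) = ex (3 + k) m (Fin.castAdd k j) := by
  rw [regroup_apply, ex]
  refine Prod.ext ?_ ?_ <;> ext i
  · refine Fin.addCases (fun i => ?_) (fun i => ?_) i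
    · simp [Pi.single_apply]
    · simp [Fin.ext_iff]; omega
  · simp

theorem regroup_inl (k m : ℕ) (j : Fin k) :
    regroup k m (0, EuclideanSpace.single (Sum.inl j) 1) = ex (3 + k) m (Fin.natAdd 3 j) := by
  rw [regroup_apply, ex]
  refine Prod.ext ?_ ?_ <;> ext i
  · refine Fin.addCases (fun i => ?_) (fun i => ?_) i
    · simp [Fin.ext_iff]; omega
    · simp
  · simp

theorem regroup_inr (k m : ℕ) (j : Fin m) :
    regroup k m (0, EuclideanSpace.single (Sum.inr j) 1) = ey (3 + k) m j := by
  rw [regroup_apply, ey]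
  refine Prod.ext ?_ ?_ <;> ext i
  · refine Fin.addCases (fun i => ?_) (fun i => ?_) i <;> simp
  · simp

/-- Dropping `x` coordinates decreases `|x|`, which is the favourable direction in both weights. -/
theorem norm_le_regroup (k m : ℕ) (q : E3 × EuclideanSpace ℝ (Fin k ⊕ Fin m)) :
    ‖q.1‖ ^ 2 ≤ ‖(regroup k m q).1‖ ^ 2 := by
  rw [EuclideanSpace.real_norm_sq_eq, EuclideanSpace.real_norm_sq_eq, Fin.sum_univ_add]
  refine le_add_of_le_of_nonneg (le_of_eq ?_) (Finset.sum_nonneg fun _ _ => sq_nonneg _)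
  simp [regroup_apply]

theorem lapG_regroup (k m : ℕ) (u : Pt (3 + k) m → ℂ)
    (q : E3 × EuclideanSpace ℝ (Fin k ⊕ Fin m)) :
    lapG (fun q => u (regroup k m q)) q = lap u (regroup k m q) := by
  have h : ∀ w, fderiv ℝ (fun q => fderiv ℝ (fun q => u (regroup k m q)) q w) q w =
      fderiv ℝ (fun p => fderiv ℝ u p (regroup k m w)) (regroup k m q) (regroup k m w) := by
    intro w
    have h1 : ∀ (g : Pt (3 + k) m → ℂ) (q), fderiv ℝ (fun q => g (regroup k m q)) q w =
        fderiv ℝ g (regroup k m q) (regroup k m w) := by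
      intro g q
      have := (regroup k m).comp_right_fderiv (f := g) (x := q)
      rw [show (fun q => g (regroup k m q)) = g ∘ (regroup k m) from rfl, this]
      rfl
    simp_rw [h1 u]
    exact h1 (fun p => fderiv ℝ u p (regroup k m w)) q
  simp only [lapG, lap, h, regroup_x, Fintype.sum_sum_type, regroup_inl, regroup_inr,
    Fin.sum_univ_add]
  ring

/-- Up to a constant factor, integrals may be computed in the regrouped coordinates. -/
theorem lintegral_regroup (k m : ℕ) : ∃ c : ℝ≥0∞, ∀ F : Pt (3 + k) m → ℝ≥0∞,
    ∫⁻ p, F p = c * ∫⁻ q, F (regroup k m q) := by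
  have : (Measure.map (regroup k m) volume).IsAddHaarMeasure :=
    (regroup k m).isAddHaarMeasure_map volume
  have hc := Measure.isAddLeftInvariant_eq_smul (volume : Measure (Pt (3 + k) m))
    (Measure.map (regroup k m) volume)
  refine ⟨Measure.addHaarScalarFactor (volume : Measure (Pt (3 + k) m))
    (Measure.map (regroup k m) volume), fun F => ?_⟩
  conv_lhs => rw [hc]
  rw [lintegral_smul_measure, ENNReal.smul_def, smul_eq_mul]
  congr 1
  exact lintegral_map_equiv F (regroup k m).toHomeomorph.toMeasurableEquiv

/-- The squared estimate in the original coordinates, for the free operator. -/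
theorem resolvent_sq (k m : ℕ) {u : Pt (3 + k) m → ℂ} (hu : ContDiff ℝ (⊤ : ℕ∞) u)
    (hs : HasCompactSupport u) (z : ℂ) {R S : ℝ} (hR : 0 < R) (hS : 0 < S) :
    ∫⁻ p : Pt (3 + k) m, ENNReal.ofReal ((R + ‖p.1‖ ^ 2 / R)⁻¹ ^ 3) * ‖u p‖ₑ ^ 2 ≤
      ENNReal.ofReal (8 * π ^ 4) * ∫⁻ p : Pt (3 + k) m,
        ENNReal.ofReal (S + ‖p.1‖ ^ 2 / S) * ‖-lap u p - z * u p‖ₑ ^ 2 := by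
  obtain ⟨c, hc⟩ := lintegral_regroup k m
  rw [hc, hc, mul_left_comm]
  refine mul_le_mul_right ?_ c
  have h := resolvent_three (v := fun q => u (regroup k m q))
    (hu.comp (regroup k m).contDiff) (hs.comp_homeomorph (regroup k m).toHomeomorph) z hR hS
  simp only [lapG_regroup] at h
  refine le_trans (lintegral_mono fun q => ?_)
    (h.trans (mul_le_mul_right (lintegral_mono fun q => ?_) _))
  · have := norm_le_regroup k m q
    refine mul_le_mul_left (ENNReal.ofReal_le_ofReal ?_) _
    gcongr
  · have := norm_le_regroup k m q
    refine mul_le_mul_left (ENNReal.ofReal_le_ofReal ?_) _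
    gcongr

theorem eLpNorm_two_weight {α : Type*} [MeasurableSpace α] (μ : Measure α) (w W : α → ℝ)
    (hw : ∀ p, 0 ≤ w p) (hW : ∀ p, w p ^ 2 = W p) (g : α → ℂ) :
    eLpNorm (fun p => w p • g p) 2 μ =
      (∫⁻ p, ENNReal.ofReal (W p) * ‖g p‖ₑ ^ 2 ∂μ) ^ (1 / 2 : ℝ) := by
  rw [eLpNorm_eq_lintegral_rpow_enorm_toReal (by norm_num) (by norm_num)]
  simp only [toReal_ofNat]
  congr 1
  refine lintegral_congr fun p => ?_
  rw [ENNReal.rpow_two, enorm_smul, mul_pow, Real.enorm_eq_ofReal (hw p),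
    ← ENNReal.ofReal_pow (hw p), hW]

end WeightedResolvent

/-- weighted `L²` form of the resolvent estimate,
`‖⟨x⟩_R^{-3} u‖_{L²} ≤ 2^13 n ‖⟨x⟩_S f‖_{L²}`. -/
theorem weighted_resolvent (n m : ℕ) (hn : 3 ≤ n) (hm : 1 ≤ m)
    (V : Pt n m → ℝ) (hV : IsRepulsive V)
    (lam eps : ℝ) (u : Pt n m → ℂ)
    (hu : ContDiff ℝ (⊤ : ℕ∞) u) (hsupp : HasCompactSupport u)
    (R S : ℝ) (hR : 0 < R) (hS : 0 < S) :
    eLpNorm (fun p : Pt n m => ((R + ‖p.1‖ ^ 2 / R) ^ (-(3:ℝ)/2)) • u p) 2 volume ≤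
      2 ^ 13 * (n : ℝ≥0∞) *
        eLpNorm (fun p : Pt n m =>
          ((S + ‖p.1‖ ^ 2 / S) ^ ((1:ℝ)/2)) • resf V lam eps u p) 2 volume := by
  have hf : resf V lam eps u = fun p => -lap u p - (lam + eps * Complex.I) * u p := by
    funext p
    simp [resf, WeightedResolvent.potential_eq_zero (by omega) hV p]
  obtain ⟨k, rfl⟩ := Nat.exists_eq_add_of_le hn
  have hw : ∀ {T : ℝ}, 0 < T → ∀ p : Pt (3 + k) m, 0 < T + ‖p.1‖ ^ 2 / T :=
    fun hT p => by positivity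
  have key := WeightedResolvent.resolvent_sq k m hu hsupp (lam + eps * Complex.I) hR hS
  rw [hf, WeightedResolvent.eLpNorm_two_weight volume _
      (fun p : Pt (3 + k) m => (R + ‖p.1‖ ^ 2 / R)⁻¹ ^ 3)
      (fun p => Real.rpow_nonneg (hw hR p).le _) (fun p => ?_) u,
    WeightedResolvent.eLpNorm_two_weight volume _
      (fun p : Pt (3 + k) m => S + ‖p.1‖ ^ 2 / S)
      (fun p => Real.rpow_nonneg (hw hS p).le _) (fun p => ?_)]
  · refine (ENNReal.rpow_le_rpow key (by norm_num)).trans ?_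
    rw [ENNReal.mul_rpow_of_nonneg _ _ (by norm_num)]
    refine mul_le_mul_left ?_ _
    have h1 : ENNReal.ofReal (8 * π ^ 4) ^ (1 / 2 : ℝ) ≤ 2 ^ 13 := by
      -- `8π⁴ ≤ 8 · 4⁴ = 2¹¹ ≤ 2²⁶`
      have h2 : ENNReal.ofReal (8 * π ^ 4) ≤ (2 ^ 13) ^ (2 : ℝ) := by
        rw [ENNReal.rpow_two]
        refine ENNReal.ofReal_le_of_le_toReal ?_
        have : π ^ 4 ≤ 4 ^ 4 := pow_le_pow_left₀ Real.pi_pos.le Real.pi_le_four 4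
        norm_num
        linarith
      refine (ENNReal.rpow_le_rpow h2 (by norm_num)).trans ?_
      rw [← ENNReal.rpow_mul]
      norm_num
    refine h1.trans (le_mul_of_one_le_right (zero_le) ?_)
    exact_mod_cast (by omega : 1 ≤ 3 + k)
  · rw [← Real.rpow_natCast, ← Real.rpow_mul (hw hS p).le]
    norm_num
  · have h := hw hR p
    generalize R + ‖p.1‖ ^ 2 / R = t at h
    rw [inv_pow, ← Real.rpow_natCast, ← Real.rpow_mul h.le, ← Real.rpow_natCast,
      ← Real.rpow_neg h.le]
    norm_num
end
end
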